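/- arXiv:2206.13466 — 3 statements merged into one kernel-verified Lean document; each statement's English description precedes it below -/
import Mathlib

section
/- Let f be a monic squarefree polynomial over ℤ with splitting field L, Galois group G, and roots α_1, ..., α_n, and set H_i = Gal(L/ℚ(α_i)). If there exists σ ∈ G fixing no root of f (i.e., G ≠ ⋃_i H_i), then there are infinitely many primes p such that f mod p has no root in 𝔽_p. -/
open Polynomial

namespace RootlessPrimes

open NumberField Ideal

/-- the number of ideals of norm `n` -/
noncomputable def cI (K : Type*) [Field K] [NumberField K] (n : ℕ) : ℕ :=
  Nat.card {I : Ideal (𝓞 K) // absNorm I = n}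

section count
variable {K : Type*} [Field K] [NumberField K]

lemma isCoprime_of_norm {I J : Ideal (𝓞 K)} (h : (absNorm I).Coprime (absNorm J)) :
    IsCoprime I J := by
  rw [Ideal.isCoprime_iff_sup_eq, ← absNorm_eq_one_iff]
  have h1 := absNorm_dvd_absNorm_of_le (le_sup_left : I ≤ I ⊔ J)
  have h2 := absNorm_dvd_absNorm_of_le (le_sup_right : J ≤ I ⊔ J)
  exact Nat.eq_one_of_dvd_coprimes h h1 h2

lemma cI_one : cI K 1 = 1 := by
  unfold cI
  rw [Nat.card_eq_one_iff_unique]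
  refine ⟨⟨fun a b => Subtype.ext ?_⟩, ⟨⟨⊤, by simp⟩⟩⟩
  rw [absNorm_eq_one_iff.1 a.2, absNorm_eq_one_iff.1 b.2]

lemma cI_mul {m n : ℕ} (h : m.Coprime n) : cI K (m * n) = cI K m * cI K n := by
  unfold cI
  rw [← Nat.card_prod]
  symm
  refine Nat.card_congr (Equiv.ofBijective
    (fun x => ⟨x.1.1 * x.2.1, by rw [map_mul, x.1.2, x.2.2]⟩) ⟨?_, ?_⟩)
  · rintro ⟨⟨I, hI⟩, ⟨J, hJ⟩⟩ ⟨⟨I', hI'⟩, ⟨J', hJ'⟩⟩ hh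
    simp only [Subtype.mk.injEq] at hh
    have key : ∀ {A B A' B' : Ideal (𝓞 K)}, (absNorm A).Coprime (absNorm B') →
        A * B = A' * B' → A ∣ A' := fun h1 h2 =>
      (isCoprime_of_norm h1).dvd_of_dvd_mul_right (Dvd.intro _ h2)
    have e1 : I = I' := dvd_antisymm (key (by rwa [hI, hJ']) hh) (key (by rwa [hI', hJ]) hh.symm)
    have e2 : J = J' := by
      rw [mul_comm I, mul_comm I'] at hh
      exact dvd_antisymm (key (by rw [hJ, hI']; exact h.symm) hh)
        (key (by rw [hJ', hI]; exact h.symm) hh.symm)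
    simp [e1, e2]
  · rintro ⟨A, hA⟩
    have hd : A ∣ span {(m : 𝓞 K)} * span {(n : 𝓞 K)} := by
      rw [span_singleton_mul_span_singleton, Ideal.dvd_span_singleton, ← Nat.cast_mul, ← hA]
      exact absNorm_mem A
    obtain ⟨I, J, hI, hJ, rfl⟩ := exists_dvd_and_dvd_of_dvd_mul hd
    have hI' := map_dvd absNorm hI
    have hJ' := map_dvd absNorm hJ
    rw [absNorm_span_natCast] at hI' hJ'
    rw [map_mul] at hA
    have c1 : (absNorm I).Coprime n := (h.pow_left _).coprime_dvd_left hI'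
    have c2 : (absNorm J).Coprime m := (h.symm.pow_left _).coprime_dvd_left hJ'
    have d1 : absNorm I ∣ m := c1.dvd_of_dvd_mul_right (Dvd.intro _ hA)
    have d2 : absNorm J ∣ n := c2.dvd_of_dvd_mul_left (Dvd.intro_left _ hA)
    have d3 : m ∣ absNorm I := c2.symm.dvd_of_dvd_mul_right (hA ▸ dvd_mul_right m n)
    have d4 : n ∣ absNorm J := c1.symm.dvd_of_dvd_mul_left (hA ▸ dvd_mul_left n m)
    exact ⟨⟨⟨I, dvd_antisymm d1 d3⟩, ⟨J, dvd_antisymm d2 d4⟩⟩, rfl⟩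

lemma card_dvd_le (k : ℕ) (M : Multiset (Ideal (𝓞 K))) (hM : ∀ P ∈ M, Prime P) :
    {I : Ideal (𝓞 K) | I ∣ (M.map (· ^ k)).prod}.Finite ∧
    {I : Ideal (𝓞 K) | I ∣ (M.map (· ^ k)).prod}.ncard ≤ (k + 1) ^ M.card := by
  induction M using Multiset.induction with
  | empty =>
    have : {I : Ideal (𝓞 K) | I ∣ 1} = {1} := by
      ext I
      rw [Set.mem_ofPred_eq, ← isUnit_iff_dvd_one, Ideal.isUnit_iff, Ideal.one_eq_top,
        Set.mem_singleton_iff]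
    simp only [Multiset.map_zero, Multiset.prod_zero, this]
    simp
  | cons P M ih =>
    obtain ⟨ih1, ih2⟩ := ih (fun Q hQ => hM Q (Multiset.mem_cons_of_mem hQ))
    set T := {I : Ideal (𝓞 K) | I ∣ (M.map (· ^ k)).prod}
    set U : Set (Ideal (𝓞 K)) := (fun j => P ^ j) '' (Finset.range (k+1) : Set ℕ)
    have hU : U.Finite := (Finset.finite_toSet _).image _
    have hUc : U.ncard ≤ k + 1 := by
      refine (Set.ncard_image_le (Finset.finite_toSet _)).trans ?_
      rw [Set.ncard_coe_finset]; simp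
    have hsub : {I : Ideal (𝓞 K) | I ∣ ((P ::ₘ M).map (· ^ k)).prod} ⊆
        (fun x : Ideal (𝓞 K) × Ideal (𝓞 K) => x.1 * x.2) '' (U ×ˢ T) := by
      intro I hI
      simp only [Multiset.map_cons, Multiset.prod_cons, Set.mem_ofPred_eq] at hI
      obtain ⟨A, B, hA, hB, rfl⟩ := exists_dvd_and_dvd_of_dvd_mul hI
      obtain ⟨j, hj, hj'⟩ := (dvd_prime_pow (hM P (Multiset.mem_cons_self _ _)) k).1 hA
      refine ⟨(A, B), ⟨⟨j, by simpa using Nat.lt_succ_of_le hj, (associated_iff_eq.1 hj').symm⟩, hB⟩, rfl⟩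
    have hfin := (hU.prod ih1).image (fun x : Ideal (𝓞 K) × Ideal (𝓞 K) => x.1 * x.2)
    refine ⟨hfin.subset hsub, (Set.ncard_le_ncard hsub hfin).trans
      ((Set.ncard_image_le (hU.prod ih1)).trans ?_)⟩
    rw [Set.ncard_prod, Multiset.card_cons, pow_succ, mul_comm]
    exact Nat.mul_le_mul ih2 hUc

lemma cI_prime_pow_le {p : ℕ} (hp : p.Prime) (k : ℕ) :
    cI K (p ^ k) ≤ (k + 1) ^ (Module.finrank ℤ (𝓞 K)) := by
  set B := span {(p : 𝓞 K)}
  have hB : B ≠ 0 := by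
    simp [B, hp.ne_zero]
  set M := UniqueFactorizationMonoid.normalizedFactors B
  have hM : ∀ P ∈ M, Prime P := fun P hP => UniqueFactorizationMonoid.prime_of_normalized_factor P hP
  have hprod : M.prod = B := associated_iff_eq.1 (UniqueFactorizationMonoid.prod_normalizedFactors hB)
  have hcard : M.card ≤ Module.finrank ℤ (𝓞 K) := by
    have h1 : (M.map absNorm).prod = p ^ (Module.finrank ℤ (𝓞 K)) := by
      rw [← absNorm_span_natCast, ← map_multiset_prod absNorm, hprod]
    have h2 : p ^ M.card ≤ (M.map absNorm).prod := by
      have : ∀ x ∈ M.map absNorm, p ≤ x := by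
        intro x hx
        obtain ⟨P, hP, rfl⟩ := Multiset.mem_map.1 hx
        have hd : absNorm P ∣ p ^ (Module.finrank ℤ (𝓞 K)) := by
          rw [← h1]; exact Multiset.dvd_prod (Multiset.mem_map_of_mem _ hP)
        have hne : absNorm P ≠ 1 := by
          rw [Ne, absNorm_eq_one_iff]
          intro h
          exact (hM P hP).not_isUnit (Ideal.isUnit_iff.2 h)
        obtain ⟨j, -, hj⟩ := (Nat.dvd_prime_pow hp).1 hd
        rw [hj] at hne ⊢
        rcases j with _ | j
        · simp at hne
        · exact Nat.le_self_pow (by simp) p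
      have := Multiset.pow_card_le_prod this
      simpa using this
    rw [h1] at h2
    exact (Nat.pow_le_pow_iff_right hp.one_lt).1 h2
  obtain ⟨f1, f2⟩ := card_dvd_le k M hM
  have hpr : (M.map (· ^ k)).prod = span {((p ^ k : ℕ) : 𝓞 K)} := by
    rw [Multiset.prod_map_pow, Multiset.map_id', hprod, Nat.cast_pow, Ideal.span_singleton_pow]
  calc cI K (p ^ k) = {I : Ideal (𝓞 K) | absNorm I = p ^ k}.ncard := rfl
    _ ≤ {I : Ideal (𝓞 K) | I ∣ (M.map (· ^ k)).prod}.ncard := by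
        refine Set.ncard_le_ncard ?_ f1
        intro I hI
        simp only [Set.mem_ofPred_eq] at hI ⊢
        rw [hpr, Ideal.dvd_span_singleton, ← hI]
        exact absNorm_mem I
    _ ≤ _ := f2.trans (Nat.pow_le_pow_right (by omega) hcard)

lemma cI_zero : cI K 0 = 1 := by
  unfold cI
  rw [Nat.card_eq_one_iff_unique]
  refine ⟨⟨fun a b => Subtype.ext ?_⟩, ⟨⟨⊥, by simp⟩⟩⟩
  rw [absNorm_eq_zero_iff.1 a.2, absNorm_eq_zero_iff.1 b.2]
end count

section analytic
open Filter Topology Finset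
variable (K : Type*) [Field K] [NumberField K]

/-- term of the zeta series -/
noncomputable def gT (s : ℝ) (n : ℕ) : ℝ := (cI K n : ℝ) * (n : ℝ) ^ (-s)

lemma gT_nonneg (s : ℝ) (n : ℕ) : 0 ≤ gT K s n := by unfold gT; positivity

lemma term_eq (s : ℝ) (hs : 1 < s) (n : ℕ) :
    LSeries.term (fun n ↦ ((cI K n : ℝ) : ℂ)) (s : ℂ) n = ((gT K s n : ℝ) : ℂ) := by
  unfold gT
  rcases eq_or_ne n 0 with rfl | hn
  · simp [Real.zero_rpow (by linarith : -s ≠ 0)]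
  · rw [LSeries.term_of_ne_zero hn, Complex.ofReal_mul, Complex.ofReal_cpow (by positivity),
      Complex.ofReal_neg, Complex.cpow_neg]
    simp [div_eq_mul_inv]

lemma tendsto_avg : Tendsto (fun n : ℕ ↦ (∑ k ∈ Icc 1 n, (cI K k : ℝ)) / (n : ℝ)) atTop
    (𝓝 (dedekindZeta_residue K)) := by
  refine ((NumberField.Ideal.tendsto_norm_le_div_atTop₀ K).comp tendsto_natCast_atTop_atTop).congr fun n ↦ ?_
  simp only [Function.comp_apply, Nat.cast_le, ← Nat.cast_sum]
  unfold cI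
  congr
  rw [← add_left_inj 1, ← card_norm_le_eq_card_norm_le_add_one,
    show Finset.Icc 1 n = Finset.Ioc 0 n from Finset.Icc_succ_left_eq_Ioc _ _,
    show 1 = Nat.card {I : Ideal (𝓞 K) // absNorm I = 0} by simp [Ideal.absNorm_eq_zero_iff],
    Finset.sum_Ioc_add_eq_sum_Icc (n.zero_le),
    ← Finset.card_preimage_eq_sum_card_image_eq (fun k _ ↦ finite_setOfPred_absNorm_eq k)]
  simp [Set.coe_eq_subtype]

lemma summable_gT (s : ℝ) (hs : 1 < s) : Summable (gT K s) := by
  have h : LSeriesSummable (fun n ↦ ((cI K n : ℝ) : ℂ)) (s : ℂ) := by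
    refine LSeriesSummable_of_sum_norm_bigO_and_nonneg (r := 1) ?_ (fun _ => Nat.cast_nonneg _)
      zero_le_one (by simpa using hs)
    exact Asymptotics.isBigO_atTop_natCast_rpow_of_tendsto_div_rpow (by simpa using tendsto_avg K)
  unfold LSeriesSummable at h
  rw [← Complex.summable_ofReal]
  exact h.congr (fun n => (term_eq K s hs n))

lemma tendsto_Z : Tendsto (fun s : ℝ ↦ (s - 1) * ∑' n, gT K s n) (𝓝[>] 1)
    (𝓝 (dedekindZeta_residue K)) := by
  have h := LSeries_tendsto_sub_mul_nhds_one_of_tendsto_sum_div_and_nonneg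
    (fun n => (cI K n : ℝ)) (tendsto_avg K) (fun _ => Nat.cast_nonneg _)
  have h2 := (Complex.continuous_re.tendsto _).comp h
  simp only [Complex.ofReal_re] at h2
  refine h2.congr' ?_
  filter_upwards [self_mem_nhdsWithin] with s hs
  have hs : 1 < s := hs
  have : LSeries (fun n ↦ ((cI K n : ℝ) : ℂ)) (s : ℂ) = ((∑' n, gT K s n : ℝ) : ℂ) := by
    unfold LSeries
    rw [Complex.ofReal_tsum]
    exact tsum_congr (term_eq K s hs)
  simp only [Function.comp_apply]
  rw [this, ← Complex.ofReal_one, ← Complex.ofReal_sub, ← Complex.ofReal_mul, Complex.ofReal_re]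

lemma gT_mul (s : ℝ) {m n : ℕ} (h : m.Coprime n) : gT K s (m * n) = gT K s m * gT K s n := by
  unfold gT
  rw [cI_mul h, Nat.cast_mul, Nat.cast_mul, Real.mul_rpow (by positivity) (by positivity)]
  ring

lemma gT_one (s : ℝ) : gT K s 1 = 1 := by simp [gT, cI_one]

lemma gT_zero (s : ℝ) (hs : 1 < s) : gT K s 0 = 0 := by
  simp [gT, Real.zero_rpow (by linarith : -s ≠ 0)]

lemma euler (s : ℝ) (hs : 1 < s) :
    HasProd (fun p : Nat.Primes ↦ ∑' e, gT K s (p ^ e)) (∑' n, gT K s n) := by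
  refine EulerProduct.eulerProduct_hasProd (gT_one K s) (fun h => gT_mul K s h) ?_ (gT_zero K s hs)
  simpa [Real.norm_eq_abs, abs_of_nonneg (gT_nonneg K s _)] using summable_gT K s hs

lemma summable_aux (N : ℕ) : Summable fun e : ℕ => ((e : ℝ) + 3) ^ N * (1 / 2 : ℝ) ^ e := by
  have h := summable_pow_mul_geometric_of_norm_lt_one (R := ℝ) N (r := 1/2) (by norm_num)
  have h2 := ((summable_nat_add_iff 3).2 h).mul_left 8
  refine h2.congr (fun e => ?_)
  push_cast
  rw [pow_add]; ring

/-- constant -/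
noncomputable def AC (N : ℕ) : ℝ := ∑' e : ℕ, ((e : ℝ) + 3) ^ N * (1 / 2 : ℝ) ^ e

lemma AC_nonneg (N : ℕ) : 0 ≤ AC N := tsum_nonneg (fun e => by positivity)

lemma rpow_neg_le_inv {s : ℝ} (hs : 1 < s) {n : ℕ} (hn : 1 ≤ n) : (n : ℝ) ^ (-s) ≤ (n : ℝ)⁻¹ := by
  rw [← Real.rpow_neg_one]
  exact Real.rpow_le_rpow_of_exponent_le (by exact_mod_cast hn) (by linarith)

lemma gT_pow_le {s : ℝ} (hs : 1 < s) {p : ℕ} (hp : p.Prime) (e : ℕ) :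
    gT K s (p ^ (e + 2)) ≤
      (((e : ℝ) + 3) ^ (Module.finrank ℤ (𝓞 K)) * (1 / 2 : ℝ) ^ e) * ((p : ℝ) ^ 2)⁻¹ := by
  have hp0 : (2 : ℝ) ≤ p := by exact_mod_cast hp.two_le
  have h1 : (cI K (p ^ (e + 2)) : ℝ) ≤ ((e : ℝ) + 3) ^ (Module.finrank ℤ (𝓞 K)) := by
    have := cI_prime_pow_le (K := K) hp (e + 2)
    have h : (cI K (p ^ (e + 2)) : ℝ) ≤ (((e + 2 + 1 : ℕ)) : ℝ) ^ (Module.finrank ℤ (𝓞 K)) := by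
      exact_mod_cast this
    refine h.trans (le_of_eq ?_)
    push_cast
    ring
  have h2 : ((p ^ (e + 2) : ℕ) : ℝ) ^ (-s) ≤ (1 / 2 : ℝ) ^ e * ((p : ℝ) ^ 2)⁻¹ := by
    refine (rpow_neg_le_inv hs (Nat.one_le_pow _ _ hp.pos)).trans ?_
    push_cast
    rw [pow_add, mul_inv, ← inv_pow]
    gcongr
    rw [inv_eq_one_div]
    gcongr
  unfold gT
  calc _ ≤ _ := mul_le_mul h1 h2 (by positivity) (by positivity)
    _ = _ := by ring

lemma local_est {s : ℝ} (hs : 1 < s) {p : ℕ} (hp : p.Prime) :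
    ∃ x : ℝ, ∑' e, gT K s (p ^ e) = 1 + x ∧ gT K s p ≤ x ∧
      x ≤ gT K s p + AC (Module.finrank ℤ (𝓞 K)) * ((p : ℝ) ^ 2)⁻¹ := by
  have hsum : Summable fun e => gT K s (p ^ e) :=
    (summable_gT K s hs).comp_injective (Nat.pow_right_injective hp.two_le)
  have hsum2 := (summable_nat_add_iff 2).2 hsum
  refine ⟨gT K s p + ∑' e, gT K s (p ^ (e + 2)), ?_, ?_, ?_⟩
  · rw [← hsum.sum_add_tsum_nat_add 2]
    simp [Finset.sum_range_succ, gT_one]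
    ring
  · have : 0 ≤ ∑' e, gT K s (p ^ (e + 2)) := tsum_nonneg (fun e => gT_nonneg K s (p ^ (e + 2)))
    linarith
  · gcongr
    unfold AC
    rw [← tsum_mul_right]
    exact hsum2.tsum_le_tsum (gT_pow_le K hs hp) ((summable_aux _).mul_right _)

lemma gT_prime_le {s : ℝ} (hs : 1 < s) {p : ℕ} (hp : p.Prime) :
    gT K s p ≤ 2 ^ (Module.finrank ℤ (𝓞 K)) * (p : ℝ)⁻¹ := by
  have := cI_prime_pow_le (K := K) hp 1
  rw [pow_one] at this
  unfold gT
  refine mul_le_mul (by exact_mod_cast this) (rpow_neg_le_inv hs hp.pos) (by positivity)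
    (by positivity)

lemma log_est {x : ℝ} (hx : 0 ≤ x) : |Real.log (1 + x) - x| ≤ x ^ 2 := by
  have h1 := Real.log_le_sub_one_of_pos (by linarith : 0 < 1 + x)
  have h2 := Real.one_sub_inv_le_log_of_pos (by linarith : 0 < 1 + x)
  have h3 : x - x ^ 2 ≤ 1 - (1 + x)⁻¹ := by
    rw [← sub_nonneg]
    have : 1 - (1 + x)⁻¹ - (x - x ^ 2) = x ^ 3 / (1 + x) := by
      field_simp; ring
    rw [this]; positivity
  rw [abs_le]; constructor <;> nlinarith [sq_nonneg x]

lemma summable_inv_sq_primes : Summable fun p : Nat.Primes => (((p : ℕ) : ℝ) ^ 2)⁻¹ :=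
  (Real.summable_nat_pow_inv.2 (by norm_num : 1 < 2)).comp_injective Subtype.val_injective

/-- `|log ζ_K(s) - ∑_p c(p) p^{-s}|` is bounded. -/
lemma log_Z_bound : ∃ C : ℝ, ∀ s : ℝ, 1 < s →
    |Real.log (∑' n, gT K s n) - ∑' p : Nat.Primes, gT K s p| ≤ C := by
  set N := Module.finrank ℤ (𝓞 K)
  set A := AC N
  have hA : 0 ≤ A := AC_nonneg N
  set B : ℝ := A + (2 ^ N + A) ^ 2
  refine ⟨∑' p : Nat.Primes, B * (((p : ℕ) : ℝ) ^ 2)⁻¹, fun s hs => ?_⟩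
  have hB : Summable fun p : Nat.Primes => B * (((p : ℕ) : ℝ) ^ 2)⁻¹ :=
    summable_inv_sq_primes.mul_left _
  choose x hx1 hx2 hx3 using fun p : Nat.Primes => local_est K hs p.2
  have hg : Summable fun p : Nat.Primes => gT K s p :=
    (summable_gT K s hs).comp_injective Subtype.val_injective
  have hx0 : ∀ p, 0 ≤ x p := fun p => (gT_nonneg K s p).trans (hx2 p)
  have hxs : Summable x := Summable.of_nonneg_of_le hx0 hx3
    (hg.add (summable_inv_sq_primes.mul_left _))
  have hls := Real.summable_log_one_add_of_summable hxs
  have hexp := Real.rexp_tsum_eq_tprod (f := fun p => 1 + x p) (fun p => by linarith [hx0 p]) hls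
  have hE := (euler K s hs).tprod_eq
  simp_rw [hx1] at hE
  rw [← hE, ← hexp, Real.log_exp, ← hls.tsum_sub hg]
  have hterm : ∀ p : Nat.Primes, |Real.log (1 + x p) - gT K s p| ≤ B * (((p : ℕ) : ℝ) ^ 2)⁻¹ := by
    intro p
    have hp1 : (1 : ℝ) ≤ (p : ℕ) := by exact_mod_cast p.2.pos
    have e1 := log_est (hx0 p)
    have e2 : x p ≤ (2 ^ N + A) * ((p : ℕ) : ℝ)⁻¹ := by
      refine (hx3 p).trans ?_
      have := gT_prime_le K hs p.2
      have h2 : (((p : ℕ) : ℝ) ^ 2)⁻¹ ≤ ((p : ℕ) : ℝ)⁻¹ := by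
        gcongr
        nlinarith
      nlinarith [mul_le_mul_of_nonneg_left h2 hA]
    have e3 : x p ^ 2 ≤ (2 ^ N + A) ^ 2 * (((p : ℕ) : ℝ) ^ 2)⁻¹ := by
      rw [← inv_pow, ← mul_pow]
      exact pow_le_pow_left₀ (hx0 p) e2 2
    have e4 := hx2 p
    have e5 := hx3 p
    rw [abs_le] at e1 ⊢
    simp only [B, add_mul]
    have : 0 ≤ A * (((p : ℕ) : ℝ) ^ 2)⁻¹ := by positivity
    constructor <;> linarith [e1.1, e1.2]
  have hab : Summable fun p : Nat.Primes => |Real.log (1 + x p) - gT K s p| :=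
    Summable.of_nonneg_of_le (fun _ => abs_nonneg _) hterm hB
  calc _ ≤ ∑' p : Nat.Primes, |Real.log (1 + x p) - gT K s p| := by
        simpa [Real.norm_eq_abs] using norm_tsum_le_tsum_norm (f := fun p : Nat.Primes => Real.log (1 + x p) - gT K s p) (by simpa [Real.norm_eq_abs] using hab)
    _ ≤ _ := hab.tsum_le_tsum hterm hB

/-- `∑_p c(p) p^{-s} = - log (s-1) + O(1)`. -/
theorem prime_sum_bound : ∃ C : ℝ, ∀ᶠ s in 𝓝[>] (1 : ℝ),
    |(∑' p : Nat.Primes, gT K s p) + Real.log (s - 1)| ≤ C := by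
  obtain ⟨C, hC⟩ := log_Z_bound K
  have hρ := dedekindZeta_residue_pos K
  have h1 := (tendsto_Z K).log hρ.ne'
  refine ⟨C + (|Real.log (dedekindZeta_residue K)| + 1), ?_⟩
  have h2 := h1.eventually (Metric.ball_mem_nhds _ zero_lt_one)
  have h3 := (tendsto_Z K).eventually (lt_mem_nhds hρ)
  filter_upwards [h2, h3, self_mem_nhdsWithin] with s hs2 hs3 hs
  have hs : 1 < s := hs
  have hZ : ∑' n, gT K s n ≠ 0 := by
    intro h; rw [h] at hs3; simp at hs3
  have hb := hC s hs
  rw [Real.dist_eq, Real.log_mul (by linarith) hZ] at hs2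
  have h5 := abs_lt.1 hs2
  have h6 := abs_le.1 hb
  have h7 := abs_le.1 (le_refl |Real.log (dedekindZeta_residue K)|)
  rw [abs_le]
  constructor <;> linarith [h5.1, h5.2, h6.1, h6.2, h7.1, h7.2]
end analytic

section algebra
set_option linter.unusedSectionVars false
open scoped Pointwise
variable {L : Type*} [Field L] [NumberField L] [IsGalois ℚ L]

/-- `g` is a Frobenius at `Q` over `p` -/
def Fr (p : ℕ) (g : Gal(L/ℚ)) (Q : Ideal (𝓞 L)) : Prop := ∀ x : 𝓞 L, g • x - x ^ p ∈ Q

/-- `p` has trivial inertia groups in `L` -/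
def Unr (L : Type*) [Field L] [NumberField L] (p : ℕ) : Prop :=
  ∀ Q : Ideal (𝓞 L), Q.IsPrime → (p : 𝓞 L) ∈ Q → ∀ g : Gal(L/ℚ),
    (∀ x : 𝓞 L, g • x - x ∈ Q) → g = 1

lemma finite_quot {K : Type*} [Field K] [NumberField K] {p : ℕ} (hp : p.Prime) {Q : Ideal (𝓞 K)}
    (hpQ : (p : 𝓞 K) ∈ Q) : Finite (𝓞 K ⧸ Q) := by
  rw [← absNorm_ne_zero_iff, Ne, absNorm_eq_zero_iff]
  rintro rfl
  simp [hp.ne_zero] at hpQ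

lemma under_int {p : ℕ} (hp : p.Prime) {Q : Ideal (𝓞 L)} (hQ : Q.IsPrime)
    (hpQ : (p : 𝓞 L) ∈ Q) : Q.under ℤ = span {(p : ℤ)} := by
  have : (span {(p : ℤ)}).IsMaximal :=
    PrincipalIdealRing.isMaximal_of_irreducible (Nat.prime_iff_prime_int.1 hp).irreducible
  symm
  apply this.eq_of_le (Ideal.IsPrime.ne_top inferInstance)
  rw [Ideal.span_singleton_le_iff_mem, Ideal.under_def, Ideal.mem_comap]
  simpa using hpQ

lemma exists_frob {p : ℕ} (hp : p.Prime) {Q : Ideal (𝓞 L)} (hQ : Q.IsPrime)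
    (hpQ : (p : 𝓞 L) ∈ Q) : ∃ g : Gal(L/ℚ), Fr p g Q := by
  have := finite_quot hp hpQ
  obtain ⟨g, hg⟩ := IsArithFrobAt.exists_of_isInvariant ℤ Gal(L/ℚ) Q
  refine ⟨g, fun x => ?_⟩
  have h := hg x
  rw [under_int hp hQ hpQ] at h
  have hc : Nat.card (ℤ ⧸ span {(p : ℤ)}) = p := by
    rw [Nat.card_congr (Int.quotientSpanNatEquivZMod p).toEquiv, Nat.card_zmod]
  rw [hc] at h
  exact h

lemma Fr.conj {p : ℕ} {g : Gal(L/ℚ)} {Q : Ideal (𝓞 L)} (h : Fr p g Q) (τ : Gal(L/ℚ)) :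
    Fr p (τ * g * τ⁻¹) (τ • Q) := by
  intro x
  rw [Ideal.mem_pointwise_smul_iff_inv_smul_mem]
  have := h (τ⁻¹ • x)
  simpa [smul_sub, mul_smul, smul_pow'] using this

lemma Fr.unique {p : ℕ} {g g' : Gal(L/ℚ)} {Q : Ideal (𝓞 L)} (h : Fr p g Q) (h' : Fr p g' Q)
    (hu : Unr L p) (hQ : Q.IsPrime) (hpQ : (p : 𝓞 L) ∈ Q) : g = g' := by
  rw [← mul_inv_eq_one]
  refine hu Q hQ hpQ _ (fun x => ?_)
  have := Q.sub_mem (h (g'⁻¹ • x)) (h' (g'⁻¹ • x))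
  simpa [mul_smul] using this

lemma natCast_mem_smul {p : ℕ} {Q : Ideal (𝓞 L)} (hpQ : (p : 𝓞 L) ∈ Q) (τ : Gal(L/ℚ)) :
    (p : 𝓞 L) ∈ τ • Q := by
  rw [Ideal.mem_pointwise_smul_iff_inv_smul_mem]
  have : τ⁻¹ • (p : 𝓞 L) = p := map_natCast (MulSemiringAction.toRingHom Gal(L/ℚ) (𝓞 L) τ⁻¹) p
  rwa [this]

lemma Fr.pow {p : ℕ} {g : Gal(L/ℚ)} {Q : Ideal (𝓞 L)} (h : Fr p g Q) (j : ℕ) (x : 𝓞 L) :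
    g ^ j • x - x ^ (p ^ j) ∈ Q := by
  induction j with
  | zero => simp
  | succ j ih =>
    have h1 := h (g ^ j • x)
    have h2 : (g ^ j • x) ^ p - (x ^ (p ^ j)) ^ p ∈ Q :=
      Q.mem_of_dvd (sub_dvd_pow_sub_pow _ _ p) ih
    have := Q.add_mem h1 h2
    rw [sub_add_sub_cancel, ← pow_mul, ← pow_succ, ← mul_smul, ← pow_succ'] at this
    exact this

lemma exists_pow_of_stab {p : ℕ} (hp : p.Prime) {Q : Ideal (𝓞 L)} (hQ : Q.IsPrime)
    (hpQ : (p : 𝓞 L) ∈ Q) {d : Gal(L/ℚ)} (hd : d • Q = Q) :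
    ∃ j : ℕ, ∀ x : 𝓞 L, d • x - x ^ (p ^ j) ∈ Q := by
  have := finite_quot hp hpQ
  have hmax : Q.IsMaximal := Ideal.Quotient.maximal_of_isField _ (Finite.isField_of_domain _)
  let _i : Field (𝓞 L ⧸ Q) := Ideal.Quotient.field Q
  have : Fact p.Prime := ⟨hp⟩
  have : CharP (𝓞 L ⧸ Q) p := (CharP.charP_iff_prime_eq_zero hp).mpr (by
    have := Ideal.Quotient.eq_zero_iff_mem.mpr hpQ
    simpa using this)
  let _i : Algebra (ZMod p) (𝓞 L ⧸ Q) := ZMod.algebra _ p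
  have hle : Q ≤ Q.comap (MulSemiringAction.toRingHom Gal(L/ℚ) (𝓞 L) d) := by
    intro x hx
    have : d • x ∈ d • Q := (Ideal.smul_mem_pointwise_smul_iff).mpr hx
    rw [hd] at this
    exact this
  let φ0 : (𝓞 L ⧸ Q) →+* (𝓞 L ⧸ Q) :=
    Ideal.quotientMap Q (MulSemiringAction.toRingHom Gal(L/ℚ) (𝓞 L) d) hle
  let φ : (𝓞 L ⧸ Q) →ₐ[ZMod p] (𝓞 L ⧸ Q) :=
    { φ0 with commutes' := fun r => RingHom.congr_fun (Subsingleton.elim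
        (φ0.comp (algebraMap (ZMod p) (𝓞 L ⧸ Q))) (algebraMap (ZMod p) (𝓞 L ⧸ Q))) r }
  have : Fintype (𝓞 L ⧸ Q) := Fintype.ofFinite _
  obtain ⟨n, hn⟩ := (FiniteField.bijective_frobeniusAlgHom_pow (ZMod p) (𝓞 L ⧸ Q)).2 φ
  refine ⟨n, fun x => ?_⟩
  have h1 := AlgHom.congr_fun hn (Ideal.Quotient.mk Q x)
  have h2 : ((FiniteField.frobeniusAlgHom (ZMod p) (𝓞 L ⧸ Q)) ^ (n : ℕ))
      (Ideal.Quotient.mk Q x) = (Ideal.Quotient.mk Q x) ^ (p ^ (n : ℕ)) := by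
    rw [AlgHom.coe_pow, FiniteField.coe_frobeniusAlgHom, pow_iterate, ZMod.card]
  have h3 : φ (Ideal.Quotient.mk Q x) = Ideal.Quotient.mk Q (d • x) := rfl
  rw [← Ideal.Quotient.eq, map_pow, ← h2, ← h3]
  exact h1.symm

lemma stab_eq_pow {p : ℕ} (hp : p.Prime) (hu : Unr L p) {Q : Ideal (𝓞 L)} (hQ : Q.IsPrime)
    (hpQ : (p : 𝓞 L) ∈ Q) {g : Gal(L/ℚ)} (hg : Fr p g Q) {d : Gal(L/ℚ)} (hd : d • Q = Q) :
    ∃ j : ℕ, d = g ^ j := by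
  obtain ⟨j, hj⟩ := exists_pow_of_stab hp hQ hpQ hd
  refine ⟨j, ?_⟩
  rw [← mul_inv_eq_one]
  refine hu Q hQ hpQ _ (fun x => ?_)
  have := Q.sub_mem (hj ((g ^ j)⁻¹ • x)) (hg.pow j ((g ^ j)⁻¹ • x))
  rw [sub_sub_sub_cancel_right, smul_inv_smul, ← mul_smul] at this
  exact this

instance instGaloisGroupSub (K : Type*) [Field K] [NumberField K] [Algebra K L]
    (H : Subgroup Gal(L/ℚ)) [IsGaloisGroup H K L] : IsGaloisGroup H (𝓞 K) (𝓞 L) :=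
  IsGaloisGroup.of_isFractionRing H (𝓞 K) (𝓞 L) K L

lemma card_eq_of_pow {k : Type*} [Field k] [Finite k] {p : ℕ} (hp : p.Prime) (h0 : (p : k) = 0)
    (hx : ∀ x : k, x ^ p - x = 0) : Nat.card k = p := by
  have : Fintype k := Fintype.ofFinite _
  have hle : Nat.card k ≤ p := by
    classical
    have hdeg : (X ^ p - X : k[X]).natDegree = p :=
      FiniteField.X_pow_card_sub_X_natDegree_eq _ hp.one_lt
    have hne : (X ^ p - X : k[X]) ≠ 0 :=
      FiniteField.X_pow_card_sub_X_ne_zero _ hp.one_lt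
    rw [Nat.card_eq_fintype_card, ← Finset.card_univ]
    conv_rhs => rw [← hdeg]
    refine Polynomial.card_le_degree_of_subset_roots (p := X ^ p - X) ?_
    intro x _
    have : x ∈ (X ^ p - X : k[X]).roots := by
      rw [Polynomial.mem_roots hne]
      simpa using hx x
    exact this
  have hdvd : p ∣ Nat.card k := by
    have : CharP k p := (CharP.charP_iff_prime_eq_zero hp).mpr h0
    rw [← CharP.cast_eq_zero_iff k p, Nat.card_eq_fintype_card]
    exact Nat.cast_card_eq_zero _
  exact le_antisymm hle (Nat.le_of_dvd Nat.card_pos hdvd)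

lemma norm_of_fix (K : Type*) [Field K] [NumberField K] [Algebra K L] (H : Subgroup Gal(L/ℚ))
    [IsGaloisGroup H K L] {p : ℕ} (hp : p.Prime) {Q : Ideal (𝓞 L)} (hQ : Q.IsPrime)
    (hpQ : (p : 𝓞 L) ∈ Q) {h : Gal(L/ℚ)} (hh : h ∈ H) (hF : Fr p h Q) :
    absNorm (Q.under (𝓞 K)) = p := by
  set P := Q.under (𝓞 K) with hP
  have hpP : (p : 𝓞 K) ∈ P := by
    rw [hP, Ideal.under_def, Ideal.mem_comap, map_natCast]
    exact hpQ
  have hPp : P.IsPrime := inferInstance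
  have := finite_quot hp hpP
  have hx : ∀ x : 𝓞 K ⧸ P, x ^ p - x = 0 := by
    intro x
    obtain ⟨x, rfl⟩ := Ideal.Quotient.mk_surjective x
    rw [← map_pow, ← map_sub, Ideal.Quotient.eq_zero_iff_mem, hP, Ideal.under_def, Ideal.mem_comap]
    have h1 := hF (algebraMap (𝓞 K) (𝓞 L) x)
    have h2 : (⟨h, hh⟩ : H) • algebraMap (𝓞 K) (𝓞 L) x = algebraMap (𝓞 K) (𝓞 L) x :=
      smul_algebraMap _ _
    have h3 : h • algebraMap (𝓞 K) (𝓞 L) x = algebraMap (𝓞 K) (𝓞 L) x := h2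
    rw [h3] at h1
    rw [map_sub, map_pow, ← neg_sub]
    exact Q.neg_mem h1
  have hmax : P.IsMaximal := Ideal.Quotient.maximal_of_isField _ (Finite.isField_of_domain _)
  let i : Field (𝓞 K ⧸ P) := Ideal.Quotient.field P
  rw [absNorm_apply, Submodule.cardQuot_apply]
  refine card_eq_of_pow hp ?_ hx
  have := Ideal.Quotient.eq_zero_iff_mem.mpr hpP
  rwa [map_natCast] at this

lemma exists_over (K : Type*) [Field K] [NumberField K] [Algebra K L] (H : Subgroup Gal(L/ℚ))
    [IsGaloisGroup H K L] {p : ℕ} (hp : p.Prime) (hu : Unr L p) {Q : Ideal (𝓞 L)} (hQ : Q.IsPrime)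
    (hpQ : (p : 𝓞 L) ∈ Q) {g : Gal(L/ℚ)} (hg : Fr p g Q) (I : Ideal (𝓞 K)) (hI : absNorm I = p) :
    ∃ τ : Gal(L/ℚ), τ * g * τ⁻¹ ∈ H ∧ (τ • Q).under (𝓞 K) = I := by
  have hIp : I.IsPrime := isPrime_of_irreducible_absNorm (by rw [hI]; exact hp)
  obtain ⟨⟨Q', hQ', hlies⟩⟩ := (inferInstance : Nonempty (I.primesOver (𝓞 L)))
  have hu' : Q'.under (𝓞 K) = I := hlies.over.symm
  have hpI : (p : 𝓞 K) ∈ I := by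
    have := absNorm_mem I
    rwa [hI] at this
  have hpQ' : (p : 𝓞 L) ∈ Q' := by
    rw [← hu', Ideal.under_def, Ideal.mem_comap, map_natCast] at hpI
    exact hpI
  obtain ⟨τ, hτ⟩ := Algebra.IsInvariant.exists_smul_of_under_eq ℤ (𝓞 L) Gal(L/ℚ) Q Q'
    (by rw [under_int hp hQ hpQ, under_int hp hQ' hpQ'])
  have := finite_quot hp hpQ'
  obtain ⟨h, hh⟩ := IsArithFrobAt.exists_of_isInvariant (𝓞 K) H Q'
  have hF : Fr p (h : Gal(L/ℚ)) Q' := by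
    intro x
    have h1 := hh x
    rw [hu', show Nat.card (𝓞 K ⧸ I) = p by
      rw [← hI, absNorm_apply, Submodule.cardQuot_apply]] at h1
    exact h1
  have hc := hg.conj τ
  rw [← hτ] at hc
  refine ⟨τ, ?_, by rw [← hτ]; exact hu'⟩
  rw [hc.unique hF hu hQ' hpQ']
  exact h.2

lemma under_smul_of_mem (K : Type*) [Field K] [NumberField K] [Algebra K L]
    (H : Subgroup Gal(L/ℚ)) [IsGaloisGroup H K L] (Q : Ideal (𝓞 L)) {h : Gal(L/ℚ)} (hh : h ∈ H) :
    (h • Q).under (𝓞 K) = Q.under (𝓞 K) :=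
  Q.under_smul (𝓞 K) (⟨h, hh⟩ : H)

lemma fiber_coset (K : Type*) [Field K] [NumberField K] [Algebra K L] (H : Subgroup Gal(L/ℚ))
    [IsGaloisGroup H K L] {p : ℕ} (hp : p.Prime) (hu : Unr L p) {Q : Ideal (𝓞 L)} (hQ : Q.IsPrime)
    (hpQ : (p : 𝓞 L) ∈ Q) {g : Gal(L/ℚ)} (hg : Fr p g Q) {τ τ0 : Gal(L/ℚ)}
    (h0 : τ0 * g * τ0⁻¹ ∈ H) (he : (τ • Q).under (𝓞 K) = (τ0 • Q).under (𝓞 K)) :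
    τ * τ0⁻¹ ∈ H := by
  have i1 := hQ.smul τ
  have i2 := hQ.smul τ0
  obtain ⟨h, hh⟩ := Algebra.IsInvariant.exists_smul_of_under_eq (𝓞 K) (𝓞 L) H (τ0 • Q) (τ • Q)
    he.symm
  have hh' : τ • Q = (h : Gal(L/ℚ)) • τ0 • Q := hh
  have hd : (τ0⁻¹ * (h : Gal(L/ℚ))⁻¹ * τ) • Q = Q := by
    rw [mul_smul, hh', mul_smul, inv_smul_smul, inv_smul_smul]
  obtain ⟨j, hj⟩ := stab_eq_pow hp hu hQ hpQ hg hd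
  have hτ : τ * τ0⁻¹ = h * (τ0 * g * τ0⁻¹) ^ j := by
    rw [conj_pow, ← hj]
    group
  rw [hτ]
  exact H.mul_mem h.2 (H.pow_mem h0 j)

/-- the main counting identity -/
lemma count (K : Type*) [Field K] [NumberField K] [Algebra K L] (H : Subgroup Gal(L/ℚ))
    [IsGaloisGroup H K L] {p : ℕ} (hp : p.Prime) (hu : Unr L p) {Q : Ideal (𝓞 L)} (hQ : Q.IsPrime)
    (hpQ : (p : 𝓞 L) ∈ Q) {g : Gal(L/ℚ)} (hg : Fr p g Q) :
    Nat.card {τ : Gal(L/ℚ) // τ * g * τ⁻¹ ∈ H} = Nat.card H * cI K p := by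
  let F : {τ : Gal(L/ℚ) // τ * g * τ⁻¹ ∈ H} → {I : Ideal (𝓞 K) // absNorm I = p} := fun τ =>
    ⟨((τ : Gal(L/ℚ)) • Q).under (𝓞 K), norm_of_fix K H hp (hQ.smul _)
      (natCast_mem_smul hpQ _) τ.2 (hg.conj _)⟩
  have key : ∀ I, Nonempty ({τ // F τ = I} ≃ H) := by
    rintro ⟨I, hI⟩
    obtain ⟨τ0, h0, hτ0⟩ := exists_over K H hp hu hQ hpQ hg I hI
    refine ⟨{ toFun := fun τ => ⟨τ.1.1 * τ0⁻¹, fiber_coset K H hp hu hQ hpQ hg h0 ?_⟩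
              invFun := fun h => ⟨⟨h * τ0, ?_⟩, ?_⟩
              left_inv := ?_
              right_inv := ?_ }⟩
    · rw [hτ0]
      exact congrArg Subtype.val τ.2
    · have : (h : Gal(L/ℚ)) * τ0 * g * ((h : Gal(L/ℚ)) * τ0)⁻¹
          = h * (τ0 * g * τ0⁻¹) * (h : Gal(L/ℚ))⁻¹ := by group
      rw [this]
      exact H.mul_mem (H.mul_mem h.2 h0) (H.inv_mem h.2)
    · apply Subtype.ext
      change (((h : Gal(L/ℚ)) * τ0) • Q).under (𝓞 K) = I
      rw [mul_smul, under_smul_of_mem K H _ h.2, hτ0]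
    · intro τ
      apply Subtype.ext
      apply Subtype.ext
      simp
    · intro h
      apply Subtype.ext
      simp
  rw [Nat.card_congr (Equiv.sigmaFiberEquiv F).symm,
    Nat.card_congr (Equiv.sigmaEquivProdOfEquiv (fun I => (key I).some)), Nat.card_prod, mul_comm]
  rfl
end algebra

section group
set_option linter.unusedSectionVars false
open ArithmeticFunction
variable {G : Type*} [Group G] [Finite G]

open scoped Classical in
/-- indicator of the generators of `zpowers σ`, written by Moebius inversion -/
noncomputable def theta (σ h : G) : ℤ :=
  ∑ d ∈ (orderOf σ).divisors, moebius d * (if h ∈ Subgroup.zpowers (σ ^ d) then 1 else 0)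

lemma theta_of_notMem {σ h : G} (hh : h ∉ Subgroup.zpowers σ) : theta σ h = 0 := by
  refine Finset.sum_eq_zero fun d _ => ?_
  rw [if_neg, mul_zero]
  intro hd
  exact hh (Subgroup.zpowers_le.mpr (Subgroup.npow_mem_zpowers σ d) hd)

lemma mem_zpowers_pow_iff (σ : G) {d : ℕ} (hd : d ∣ orderOf σ) (k : ℕ) :
    σ ^ k ∈ Subgroup.zpowers (σ ^ d) ↔ d ∣ k := by
  constructor
  · rintro ⟨i, hi⟩
    have hi' : σ ^ ((d : ℤ) * i) = σ ^ (k : ℤ) := by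
      rw [zpow_mul, zpow_natCast, zpow_natCast]
      exact hi
    rw [zpow_eq_zpow_iff_modEq] at hi'
    have h1 : (d : ℤ) * i ≡ k [ZMOD d] := hi'.of_dvd (by exact_mod_cast hd)
    have h2 : (d : ℤ) ∣ k - d * i := h1.dvd
    have h3 : (d : ℤ) ∣ k := by
      have := dvd_add h2 (dvd_mul_right (d : ℤ) i)
      simpa using this
    exact_mod_cast h3
  · rintro ⟨c, rfl⟩
    rw [pow_mul]
    exact Subgroup.npow_mem_zpowers _ _

lemma theta_pow (σ : G) (k : ℕ) :
    theta σ (σ ^ k) = if Nat.gcd k (orderOf σ) = 1 then 1 else 0 := by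
  have hm : orderOf σ ≠ 0 := (orderOf_pos σ).ne'
  have h1 : theta σ (σ ^ k) = ∑ d ∈ (Nat.gcd k (orderOf σ)).divisors, moebius d := by
    rw [theta]
    have hsub : (Nat.gcd k (orderOf σ)).divisors
        = (orderOf σ).divisors.filter (fun d => d ∣ k) := by
      ext d
      simp only [Nat.mem_divisors, Finset.mem_filter, Nat.dvd_gcd_iff, ne_eq, Nat.gcd_eq_zero_iff]
      tauto
    rw [hsub, Finset.sum_filter]
    refine Finset.sum_congr rfl fun d hd => ?_
    have he := mem_zpowers_pow_iff σ (Nat.dvd_of_mem_divisors hd) k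
    by_cases hk : d ∣ k
    · rw [if_pos (he.mpr hk), if_pos hk, mul_one]
    · rw [if_neg (fun h => hk (he.mp h)), if_neg hk, mul_zero]
  rw [h1, ← coe_mul_zeta_apply, moebius_mul_coe_zeta, one_apply]

lemma theta_nonneg (σ h : G) : 0 ≤ theta σ h := by
  by_cases hh : h ∈ Subgroup.zpowers σ
  · rw [← mem_powers_iff_mem_zpowers] at hh
    obtain ⟨k, rfl⟩ := hh
    change 0 ≤ theta σ (σ ^ k)
    rw [theta_pow]
    split_ifs <;> simp
  · rw [theta_of_notMem hh]

lemma theta_self (σ : G) : theta σ σ = 1 := by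
  have := theta_pow σ 1
  simpa using this

lemma mem_zpowers_of_theta {σ h : G} (hh : theta σ h ≠ 0) : σ ∈ Subgroup.zpowers h := by
  have h1 : h ∈ Subgroup.zpowers σ := by
    by_contra hc
    exact hh (theta_of_notMem hc)
  rw [← mem_powers_iff_mem_zpowers] at h1
  obtain ⟨k, rfl⟩ := h1
  change theta σ (σ ^ k) ≠ 0 at hh
  rw [theta_pow] at hh
  have hc : Nat.gcd k (orderOf σ) = 1 := by
    by_contra hc
    rw [if_neg hc] at hh
    exact hh rfl
  obtain ⟨j, hj⟩ := exists_pow_eq_self_of_coprime (x := σ) (n := k) hc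
  change σ ∈ Subgroup.zpowers (σ ^ k)
  exact ⟨(j : ℤ), by simpa using hj⟩

lemma sum_theta [Fintype G] (σ : G) :
    ∑ h : G, theta σ h
      = ∑ d ∈ (orderOf σ).divisors, moebius d * (Nat.card (Subgroup.zpowers (σ ^ d)) : ℤ) := by
  classical
  simp only [theta]
  rw [Finset.sum_comm]
  refine Finset.sum_congr rfl fun d _ => ?_
  rw [← Finset.mul_sum]
  congr 1
  rw [Finset.sum_boole, Nat.card_eq_fintype_card, Fintype.card_subtype]

lemma sum_theta_conj [Fintype G] (σ g : G) :
    ∑ τ : G, theta σ (τ * g * τ⁻¹)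
      = ∑ d ∈ (orderOf σ).divisors, moebius d *
        (Nat.card {τ : G // τ * g * τ⁻¹ ∈ Subgroup.zpowers (σ ^ d)} : ℤ) := by
  classical
  simp only [theta]
  rw [Finset.sum_comm]
  refine Finset.sum_congr rfl fun d _ => ?_
  rw [← Finset.mul_sum]
  congr 1
  rw [Finset.sum_boole, Nat.card_eq_fintype_card, Fintype.card_subtype]
end group

section good
set_option linter.unusedSectionVars false
open scoped Pointwise
variable {L : Type*} [Field L] [NumberField L]

lemma exists_factor (f : ℤ[X]) (hm : f.Monic) (hs : (f.map (algebraMap ℤ L)).Splits) :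
    ∃ s : Multiset (𝓞 L), f.map (algebraMap ℤ (𝓞 L)) = (s.map (fun a => X - C a)).prod := by
  have hmm : (f.map (algebraMap ℤ L)).Monic := hm.map _
  have hlift : ∀ x ∈ (f.map (algebraMap ℤ L)).roots, ∃ y : 𝓞 L, algebraMap (𝓞 L) L y = x := by
    intro x hx
    have hr : IsIntegral ℤ x := by
      refine ⟨f, hm, ?_⟩
      rw [Polynomial.mem_roots hmm.ne_zero, IsRoot.def, eval_map] at hx
      exact hx
    exact ⟨⟨x, hr⟩, rfl⟩
  have : CanLift L (𝓞 L) (algebraMap (𝓞 L) L) (fun x => ∃ y : 𝓞 L, algebraMap (𝓞 L) L y = x) :=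
    ⟨fun _ h => h⟩
  obtain ⟨s, hss⟩ := (Multiset.canLift (algebraMap (𝓞 L) L)
    (fun x => ∃ y : 𝓞 L, algebraMap (𝓞 L) L y = x)).prf _ hlift
  refine ⟨s, ?_⟩
  apply Polynomial.map_injective (algebraMap (𝓞 L) L) (FaithfulSMul.algebraMap_injective _ _)
  rw [Polynomial.map_map, ← IsScalarTower.algebraMap_eq, Polynomial.map_multiset_prod,
    Multiset.map_map, hs.eq_prod_roots_of_monic hmm, ← hss, Multiset.map_map]
  simp

lemma exists_sep (f : ℤ[X]) (hm : f.Monic) :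
    ∃ N : ℕ, N ≠ 0 ∧ ∀ p : ℕ, p.Prime → ¬ p ∣ N → ∀ Q : Ideal (𝓞 L), Q.IsPrime →
      (p : 𝓞 L) ∈ Q → ∀ α β : 𝓞 L, aeval α f = 0 → aeval β f = 0 → α - β ∈ Q → α = β := by
  classical
  have hmm : (f.map (algebraMap ℤ (𝓞 L))).Monic := hm.map _
  set S : Finset (𝓞 L) := (f.map (algebraMap ℤ (𝓞 L))).roots.toFinset with hS
  set D : 𝓞 L := ∏ x ∈ S.offDiag, (x.1 - x.2) with hD
  have hD0 : D ≠ 0 := by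
    rw [hD, Finset.prod_ne_zero_iff]
    intro x hx
    rw [Finset.mem_offDiag] at hx
    exact sub_ne_zero.mpr hx.2.2
  have hmem : ∀ α : 𝓞 L, aeval α f = 0 → α ∈ S := by
    intro α hα
    rw [hS, Multiset.mem_toFinset, Polynomial.mem_roots hmm.ne_zero, IsRoot.def, eval_map_algebraMap]
    exact hα
  refine ⟨absNorm (span {D}), ?_, ?_⟩
  · rw [Ne, absNorm_eq_zero_iff, Ideal.span_singleton_eq_bot]
    exact hD0
  · intro p hp hpN Q hQ hpQ α β hα hβ hαβ
    by_contra hne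
    have hDQ : D ∈ Q := by
      refine Q.mem_of_dvd ?_ hαβ
      exact Finset.dvd_prod_of_mem (fun x : 𝓞 L × 𝓞 L => x.1 - x.2)
        (Finset.mem_offDiag.mpr ⟨hmem α hα, hmem β hβ, hne⟩ : (α, β) ∈ S.offDiag)
    have hNQ : ((absNorm (span {D}) : ℕ) : 𝓞 L) ∈ Q :=
      (Ideal.span_singleton_le_iff_mem Q).mpr hDQ (absNorm_mem _)
    have hco : IsCoprime (p : ℤ) (absNorm (span {D}) : ℤ) :=
      Nat.isCoprime_iff_coprime.mpr ((Nat.Prime.coprime_iff_not_dvd hp).mpr hpN)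
    obtain ⟨a, b, hab⟩ := hco
    apply hQ.ne_top
    rw [Ideal.eq_top_iff_one]
    have : (1 : 𝓞 L) = (a : 𝓞 L) * p + b * ((absNorm (span {D}) : ℕ) : 𝓞 L) := by
      have := congrArg (Int.cast : ℤ → 𝓞 L) hab
      push_cast at this
      exact this.symm
    rw [this]
    exact Q.add_mem (Q.mul_mem_left _ hpQ) (Q.mul_mem_left _ hNQ)

/-- roots of `f` are separated modulo primes above `p` -/
def Sep (L : Type*) [Field L] [NumberField L] (f : ℤ[X]) (p : ℕ) : Prop :=
  ∀ Q : Ideal (𝓞 L), Q.IsPrime →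
      (p : 𝓞 L) ∈ Q → ∀ α β : 𝓞 L, aeval α f = 0 → aeval β f = 0 → α - β ∈ Q → α = β

lemma aeval_smul_eq {f : ℤ[X]} {α : 𝓞 L} (h : aeval α f = 0) (g : Gal(L/ℚ)) :
    aeval (g • α) f = 0 := by
  have := Polynomial.aeval_algHom_apply
    ((MulSemiringAction.toRingHom Gal(L/ℚ) (𝓞 L) g).toIntAlgHom) α f
  rw [h, map_zero] at this
  exact this

lemma coe_smul_eq (g : Gal(L/ℚ)) (x : 𝓞 L) : ((g • x : 𝓞 L) : L) = g (x : L) := rfl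

lemma unr_of_sep {f : ℤ[X]} (hm : f.Monic)
    (hgen : ∀ g : Gal(L/ℚ), (∀ α : L, aeval α f = 0 → g α = α) → g = 1) {p : ℕ}
    (hs : Sep L f p) : Unr L p := by
  intro Q hQ hpQ g hg
  refine hgen g (fun α hα => ?_)
  have hαint : IsIntegral ℤ α := ⟨f, hm, hα⟩
  obtain ⟨α, rfl⟩ : ∃ β : 𝓞 L, algebraMap (𝓞 L) L β = α := ⟨⟨α, hαint⟩, rfl⟩
  have hα' : aeval α f = 0 := by
    apply FaithfulSMul.algebraMap_injective (𝓞 L) L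
    rw [map_zero, ← Polynomial.aeval_algebraMap_apply]
    exact hα
  have := hs Q hQ hpQ _ _ (aeval_smul_eq hα' g) hα' (hg _)
  exact congrArg (fun x : 𝓞 L => (x : L)) this

lemma exists_fixed {f : ℤ[X]} (hm : f.Monic) (hspl : (f.map (algebraMap ℤ L)).Splits) {p : ℕ}
    (hp : p.Prime) (hs : Sep L f p) {x : ZMod p}
    (hx : (f.map (Int.castRingHom (ZMod p))).eval x = 0) {Q : Ideal (𝓞 L)} (hQ : Q.IsPrime)
    (hpQ : (p : 𝓞 L) ∈ Q) {h : Gal(L/ℚ)} (hF : Fr p h Q) :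
    ∃ α : L, aeval α f = 0 ∧ h α = α := by
  have : Fact p.Prime := ⟨hp⟩
  obtain ⟨s, hfs⟩ := exists_factor f hm hspl
  obtain ⟨a, rfl⟩ := ZMod.intCast_surjective x
  have hdvd : ∀ z : ℤ, (p : ℤ) ∣ z → (z : 𝓞 L) ∈ Q := by
    rintro z ⟨c, rfl⟩
    push_cast
    exact Q.mul_mem_right _ hpQ
  have h1 : (p : ℤ) ∣ f.eval a := by
    rw [← ZMod.intCast_zmod_eq_zero_iff_dvd]
    have := Polynomial.eval_intCast_map (Int.castRingHom (ZMod p)) f a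
    rw [hx] at this
    exact this.symm
  have h2 : (f.map (algebraMap ℤ (𝓞 L))).eval (a : 𝓞 L) ∈ Q := by
    have := Polynomial.eval_intCast_map (algebraMap ℤ (𝓞 L)) f a
    rw [this]
    exact hdvd _ h1
  have h3 : ∃ α ∈ s, (a : 𝓞 L) - α ∈ Q := by
    rw [hfs, Polynomial.eval_multiset_prod, Multiset.map_map,
      hQ.multiset_prod_mem_iff_exists_mem] at h2
    simpa using h2
  obtain ⟨α, hαs, hα⟩ := h3
  have hroot : aeval α f = 0 := by
    rw [← Polynomial.eval_map_algebraMap, hfs, Polynomial.eval_multiset_prod, Multiset.map_map]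
    apply Multiset.prod_eq_zero
    rw [Multiset.mem_map]
    exact ⟨α, hαs, by simp⟩
  have h4 : (a : 𝓞 L) ^ p - a ∈ Q := by
    have : (p : ℤ) ∣ a ^ p - a := by
      rw [← ZMod.intCast_zmod_eq_zero_iff_dvd]
      push_cast
      rw [ZMod.pow_card, sub_self]
    have := hdvd _ this
    push_cast at this
    exact this
  have h5 : (a : 𝓞 L) ^ p - α ^ p ∈ Q := Q.mem_of_dvd (sub_dvd_pow_sub_pow _ _ p) hα
  have h6 : h • α - α ∈ Q := by
    have e : h • α - α
      = (h • α - α ^ p) - ((a : 𝓞 L) ^ p - α ^ p) + ((a : 𝓞 L) ^ p - a) + (a - α) := by ring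
    rw [e]
    exact Q.add_mem (Q.add_mem (Q.sub_mem (hF α) h5) h4) hα
  have h7 := hs Q hQ hpQ _ _ (aeval_smul_eq hroot h) hroot h6
  refine ⟨(α : L), ?_, congrArg (fun x : 𝓞 L => (x : L)) h7⟩
  have := Polynomial.aeval_algebraMap_apply L α f
  rw [hroot, map_zero] at this
  exact this
end good

section final
set_option linter.unusedSectionVars false
open ArithmeticFunction Filter Topology
variable {L : Type*} [Field L] [NumberField L] [IsGalois ℚ L]

/-- the fixed field of `⟨σ ^ d⟩` -/
noncomputable abbrev KK (σ : Gal(L/ℚ)) (d : ℕ) : IntermediateField ℚ L :=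
  FixedPoints.intermediateField (Subgroup.zpowers (σ ^ d))

/-- the weight attached to `d` -/
noncomputable def wt (σ : Gal(L/ℚ)) (d : ℕ) : ℤ :=
  moebius d * (Nat.card (Subgroup.zpowers (σ ^ d)) : ℤ)

lemma wt_sum_zero (σ : Gal(L/ℚ)) {f : ℤ[X]} (hm : f.Monic)
    (hspl : (f.map (algebraMap ℤ L)).Splits)
    (hgen : ∀ g : Gal(L/ℚ), (∀ α : L, aeval α f = 0 → g α = α) → g = 1)
    (hσ : ∀ α : L, aeval α f = 0 → σ α ≠ α)
    {p : ℕ} (hp : p.Prime) (hs : Sep L f p) {x : ZMod p}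
    (hx : (f.map (Int.castRingHom (ZMod p))).eval x = 0) :
    ∑ d ∈ (orderOf σ).divisors, wt σ d * (cI (KK σ d) p : ℤ) = 0 := by
  have hu : Unr L p := unr_of_sep hm hgen hs
  have hI : (span {(p : ℤ)}).IsPrime :=
    (Ideal.span_singleton_prime (by exact_mod_cast hp.ne_zero)).mpr (Nat.prime_iff_prime_int.1 hp)
  obtain ⟨⟨Q, hQ, hlies⟩⟩ := (inferInstance : Nonempty ((span {(p : ℤ)}).primesOver (𝓞 L)))
  have hpQ : (p : 𝓞 L) ∈ Q := by
    have h1 : (p : ℤ) ∈ Q.under ℤ := by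
      rw [← hlies.over]
      exact Ideal.mem_span_singleton_self _
    rw [Ideal.under_def, Ideal.mem_comap] at h1
    simpa using h1
  obtain ⟨g, hg⟩ := exists_frob hp hQ hpQ
  have h0 : ∑ τ : Gal(L/ℚ), theta σ (τ * g * τ⁻¹) = 0 := by
    refine Finset.sum_eq_zero fun τ _ => ?_
    by_contra hne
    have hmem := mem_zpowers_of_theta hne
    obtain ⟨α, hα, hfix⟩ := exists_fixed hm hspl hp hs hx (hQ.smul τ) (natCast_mem_smul hpQ τ)
      (hg.conj τ)
    refine hσ α hα ?_
    have hle : Subgroup.zpowers (τ * g * τ⁻¹) ≤ MulAction.stabilizer Gal(L/ℚ) α :=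
      Subgroup.zpowers_le.mpr hfix
    exact hle hmem
  rw [sum_theta_conj] at h0
  rw [← h0]
  refine Finset.sum_congr rfl fun d _ => ?_
  rw [count (KK σ d) (Subgroup.zpowers (σ ^ d)) hp hu hQ hpQ hg, wt]
  push_cast
  ring

lemma wt_sum_pos (σ : Gal(L/ℚ)) : 0 < ∑ d ∈ (orderOf σ).divisors, wt σ d := by
  have := sum_theta σ
  unfold wt
  rw [← this]
  refine Finset.sum_pos' (fun h _ => theta_nonneg σ h) ⟨σ, Finset.mem_univ _, ?_⟩
  rw [theta_self]
  exact one_pos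

lemma main_aux (f : ℤ[X]) (hm : f.Monic) (hspl : (f.map (algebraMap ℤ L)).Splits)
    (hgen : ∀ g : Gal(L/ℚ), (∀ α : L, aeval α f = 0 → g α = α) → g = 1)
    (σ : Gal(L/ℚ)) (hσ : ∀ α : L, aeval α f = 0 → σ α ≠ α) :
    {p : ℕ | p.Prime ∧ ∀ x : ZMod p, (f.map (Int.castRingHom (ZMod p))).eval x ≠ 0}.Infinite := by
  intro hfin
  obtain ⟨N, hN, hsep⟩ := exists_sep (L := L) f hm
  set T := (orderOf σ).divisors with hT
  set B : Finset ℕ := hfin.toFinset ∪ N.divisors with hB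
  -- coefficients
  let a : ℕ → ℝ := fun n => ∑ d ∈ T, (wt σ d : ℝ) * (cI (KK σ d) n : ℝ)
  have ha : ∀ p : ℕ, p.Prime → p ∉ B → a p = 0 := by
    intro p hp hpB
    rw [hB, Finset.mem_union, not_or, Set.Finite.mem_toFinset, Nat.mem_divisors] at hpB
    have h1 : ¬ p ∣ N := fun h => hpB.2 ⟨h, hN⟩
    have h2 : ∃ x : ZMod p, (f.map (Int.castRingHom (ZMod p))).eval x = 0 := by
      by_contra hc
      push Not at hc
      exact hpB.1 ⟨hp, hc⟩
    obtain ⟨x, hx⟩ := h2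
    have := wt_sum_zero σ hm hspl hgen hσ hp (hsep p hp h1) hx
    have h3 := congrArg (Int.cast : ℤ → ℝ) this
    push_cast at h3
    exact h3
  -- F(s) is bounded
  have hbdd : ∀ s : ℝ, 1 < s →
      |∑ d ∈ T, (wt σ d : ℝ) * ∑' p : Nat.Primes, gT (KK σ d) s p| ≤ ∑ n ∈ B, |a n| := by
    intro s hs
    have hsum : ∀ d ∈ T, Summable fun p : Nat.Primes => (wt σ d : ℝ) * gT (KK σ d) s p := by
      intro d _
      exact ((summable_gT (KK σ d) s hs).comp_injective Subtype.val_injective).mul_left _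
    have h1 : ∑ d ∈ T, (wt σ d : ℝ) * ∑' p : Nat.Primes, gT (KK σ d) s p
        = ∑' p : Nat.Primes, a p * ((p : ℕ) : ℝ) ^ (-s) := by
      simp_rw [← tsum_mul_left]
      rw [← Summable.tsum_finsetSum hsum]
      refine tsum_congr fun p => ?_
      simp only [a, gT, Finset.sum_mul, mul_assoc]
    classical
    let B' : Finset Nat.Primes := B.subtype Nat.Prime
    have h2 : ∑' p : Nat.Primes, a p * ((p : ℕ) : ℝ) ^ (-s)
        = ∑ p ∈ B', a p * ((p : ℕ) : ℝ) ^ (-s) := by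
      refine tsum_eq_sum fun p hp => ?_
      rw [ha p p.2 (fun h => hp (Finset.mem_subtype.mpr h)), zero_mul]
    rw [h1, h2]
    refine (Finset.abs_sum_le_sum_abs _ _).trans ?_
    have h3 : ∀ p ∈ B', |a p * ((p : ℕ) : ℝ) ^ (-s)| ≤ |a p| := by
      intro p _
      rw [abs_mul]
      refine mul_le_of_le_one_right (abs_nonneg _) ?_
      rw [abs_of_nonneg (by positivity)]
      exact Real.rpow_le_one_of_one_le_of_nonpos (by exact_mod_cast p.2.one_lt.le) (by linarith)
    refine (Finset.sum_le_sum h3).trans ?_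
    rw [← Finset.sum_image (f := fun n : ℕ => |a n|) (g := fun p : Nat.Primes => (p : ℕ))
      (Subtype.val_injective.injOn)]
    refine Finset.sum_le_sum_of_subset_of_nonneg ?_ (fun _ _ _ => abs_nonneg _)
    intro n hn
    obtain ⟨p, hp, rfl⟩ := Finset.mem_image.mp hn
    exact Finset.mem_subtype.mp hp
  choose C hC using fun d : ℕ => prime_sum_bound (KK σ d)
  have hev : ∀ᶠ s in 𝓝[>] (1 : ℝ), ∀ d ∈ T,
      |(∑' p : Nat.Primes, gT (KK σ d) s p) + Real.log (s - 1)| ≤ C d :=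
    (Finset.eventually_all T).mpr fun d _ => hC d
  set M : ℝ := ∑ d ∈ T, (wt σ d : ℝ) with hM
  have hMpos : 0 < M := by
    have := wt_sum_pos σ
    rw [hM]
    exact_mod_cast this
  set E : ℝ := (∑ d ∈ T, |(wt σ d : ℝ)| * C d) + ∑ n ∈ B, |a n| with hE
  have hlog : ∀ᶠ s in 𝓝[>] (1 : ℝ), M * (- Real.log (s - 1)) ≤ E := by
    filter_upwards [hev, self_mem_nhdsWithin] with s h1 h2
    have h3 := hbdd s h2
    have h4 : |∑ d ∈ T, (wt σ d : ℝ) * ((∑' p : Nat.Primes, gT (KK σ d) s p) + Real.log (s - 1))|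
        ≤ ∑ d ∈ T, |(wt σ d : ℝ)| * C d := by
      refine (Finset.abs_sum_le_sum_abs _ _).trans (Finset.sum_le_sum fun d hd => ?_)
      rw [abs_mul]
      exact mul_le_mul_of_nonneg_left (h1 d hd) (abs_nonneg _)
    simp_rw [mul_add] at h4
    rw [Finset.sum_add_distrib, ← Finset.sum_mul, ← hM] at h4
    have h5 := (abs_le.mp h3).2
    have h6 := (abs_le.mp h4).1
    rw [hE]
    linarith
  have htend : Tendsto (fun s : ℝ => M * (- Real.log (s - 1))) (𝓝[>] 1) atTop := by
    refine Tendsto.const_mul_atTop hMpos (tendsto_neg_atBot_atTop.comp ?_)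
    refine Real.tendsto_log_nhdsGT_zero.comp ?_
    refine tendsto_nhdsWithin_iff.mpr ⟨?_, ?_⟩
    · have : Tendsto (fun s : ℝ => s - 1) (𝓝 1) (𝓝 (1 - 1)) := tendsto_id.sub_const 1
      rw [sub_self] at this
      exact this.mono_left nhdsWithin_le_nhds
    · filter_upwards [self_mem_nhdsWithin] with s hs
      exact sub_pos.mpr (Set.mem_Ioi.mp hs)
  have h7 := htend.eventually (eventually_gt_atTop E)
  obtain ⟨s, h8, h9⟩ := (h7.and hlog).exists
  linarith
end final

end RootlessPrimes

/-- If some element of the Galois group of a monic squarefree integer polynomial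
fixes no root, then there are infinitely many primes modulo which it has no root. -/
theorem infinitely_many_rootless_primes_of_fixed_point_free (f : Polynomial ℤ)
    (hm : f.Monic) (hsf : Squarefree f)
    (σ : (f.map (algebraMap ℤ ℚ)).SplittingField ≃ₐ[ℚ]
        (f.map (algebraMap ℤ ℚ)).SplittingField)
    (hσ : ∀ α : (f.map (algebraMap ℤ ℚ)).SplittingField,
      Polynomial.aeval α (f.map (algebraMap ℤ ℚ)) = 0 → σ α ≠ α) :
    {p : ℕ | p.Prime ∧ ∀ x : ZMod p, (f.map (Int.castRingHom (ZMod p))).eval x ≠ 0}.Infinite := by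
  have i1 : NumberField (f.map (algebraMap ℤ ℚ)).SplittingField :=
    { to_charZero := inferInstance, to_finiteDimensional := inferInstance }
  have i0 : IsSplittingField ℚ (f.map (algebraMap ℤ ℚ)).SplittingField
      (f.map (algebraMap ℤ ℚ)) := by
    have h0 := IsSplittingField.splittingField (f.map (algebraMap ℤ ℚ))
    convert h0
    exact Subsingleton.elim _ _
  have i2 : Normal ℚ (f.map (algebraMap ℤ ℚ)).SplittingField :=
    Normal.of_isSplittingField (f.map (algebraMap ℤ ℚ))
  have i3 : IsGalois ℚ (f.map (algebraMap ℤ ℚ)).SplittingField := ⟨⟩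
  refine RootlessPrimes.main_aux (L := (f.map (algebraMap ℤ ℚ)).SplittingField) f hm ?_ ?_ σ ?_
  · have := Polynomial.IsSplittingField.splits (f.map (algebraMap ℤ ℚ)).SplittingField (f.map (algebraMap ℤ ℚ))
    rwa [Polynomial.map_map, ← IsScalarTower.algebraMap_eq] at this
  · intro g hg
    have hadj := Polynomial.IsSplittingField.adjoin_rootSet (f.map (algebraMap ℤ ℚ)).SplittingField (f.map (algebraMap ℤ ℚ))
    apply AlgEquiv.ext
    intro x
    have hx : x ∈ Algebra.adjoin ℚ
        ((f.map (algebraMap ℤ ℚ)).rootSet (f.map (algebraMap ℤ ℚ)).SplittingField) := by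
      rw [hadj]
      exact Algebra.mem_top
    have hle : Algebra.adjoin ℚ
        ((f.map (algebraMap ℤ ℚ)).rootSet (f.map (algebraMap ℤ ℚ)).SplittingField)
        ≤ AlgHom.equalizer (g : (f.map (algebraMap ℤ ℚ)).SplittingField →ₐ[ℚ]
          (f.map (algebraMap ℤ ℚ)).SplittingField) (AlgHom.id ℚ _) := by
      rw [Algebra.adjoin_le_iff]
      intro α hα
      have h1 := Polynomial.aeval_eq_zero_of_mem_rootSet hα
      rw [Polynomial.aeval_map_algebraMap] at h1
      exact hg α h1
    exact hle hx
  · intro α hα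
    apply hσ
    rw [Polynomial.aeval_map_algebraMap]
    exact hα
end

section
/- Let f ∈ ℤ[X] be monic and irreducible of degree ≥ 2. Then there exist infinitely many primes p such that f mod p has no root in 𝔽_p. -/
open Polynomial
open NumberField Filter Topology

theorem euler_finset {M : Type*} [CommMonoidWithZero M] [Nontrivial M] [UniqueFactorizationMonoid M]
    [Subsingleton Mˣ] (w : M →* ENNReal) (T : Finset M) (hT : ∀ P ∈ T, Prime P) :
    ∑' I : {I : M // I ≠ 0 ∧ ∀ P, Prime P → P ∣ I → P ∈ T}, w I = ∏ P ∈ T, (1 - w P)⁻¹ := by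
  classical
  have := UniqueFactorizationMonoid.instDecompositionMonoid (α := M)
  induction T using Finset.induction_on with
  | empty =>
    have h1 : ∀ I : M, (I ≠ 0 ∧ ∀ P, Prime P → P ∣ I → P ∈ (∅ : Finset M)) ↔ I = 1 := by
      intro I
      constructor
      · rintro ⟨h0, h⟩
        by_contra hne
        have hu : ¬ IsUnit I := by rwa [isUnit_iff_eq_one]
        obtain ⟨P, hP, hd⟩ := WfDvdMonoid.exists_irreducible_factor hu h0
        simpa using h P hP.prime hd
      · rintro rfl
        refine ⟨one_ne_zero, fun P hP hd => (hP.not_isUnit (isUnit_of_dvd_one hd)).elim⟩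
    rw [tsum_eq_single ⟨1, (h1 1).2 rfl⟩]
    · simp
    · rintro ⟨b, hb⟩ hne
      exact (hne (Subtype.ext ((h1 b).1 hb))).elim
  | insert Q T hQ ih =>
    have hQp : Prime Q := hT Q (by simp)
    have hTp : ∀ P ∈ T, Prime P := fun P hP => hT P (by simp [hP])
    have hnd : ∀ I : {I : M // I ≠ 0 ∧ ∀ P, Prime P → P ∣ I → P ∈ T}, ¬ Q ∣ I.1 :=
      fun I h => hQ (I.2.2 Q hQp h)
    let e : ℕ × {I : M // I ≠ 0 ∧ ∀ P, Prime P → P ∣ I → P ∈ T} →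
        {I : M // I ≠ 0 ∧ ∀ P, Prime P → P ∣ I → P ∈ insert Q T} := fun x =>
      ⟨Q ^ x.1 * x.2.1, mul_ne_zero (pow_ne_zero _ hQp.ne_zero) x.2.2.1, by
        intro P hP hd
        rcases hP.dvd_or_dvd hd with h | h
        · have := (Prime.dvd_prime_iff_associated hP hQp).1 (hP.dvd_of_dvd_pow h)
          rw [associated_iff_eq] at this
          simp [this]
        · simp [x.2.2.2 P hP h]⟩
    have he : Function.Bijective e := by
      constructor
      · rintro ⟨k, I⟩ ⟨j, J⟩ h
        have h' : Q ^ k * I.1 = Q ^ j * J.1 := congrArg Subtype.val h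
        have hkj : k = j := by
          have hm := congrArg (emultiplicity Q) h'
          rw [emultiplicity_mul hQp, emultiplicity_mul hQp, emultiplicity_eq_zero.2 (hnd I),
            emultiplicity_eq_zero.2 (hnd J), emultiplicity_pow_self_of_prime hQp,
            emultiplicity_pow_self_of_prime hQp] at hm
          simpa using hm
        subst hkj
        have := mul_left_cancel₀ (pow_ne_zero _ hQp.ne_zero) h'
        rw [Subtype.ext this]
      · rintro ⟨I, h0, h⟩
        obtain ⟨n, c, hc, rfl⟩ := WfDvdMonoid.max_power_factor h0 hQp.irreducible
        refine ⟨⟨n, c, right_ne_zero_of_mul h0, fun P hP hd => ?_⟩, rfl⟩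
        have := h P hP (hd.mul_left _)
        rcases Finset.mem_insert.1 this with rfl | h
        · exact (hc hd).elim
        · exact h
    rw [← (Equiv.ofBijective e he).tsum_eq, Finset.prod_insert hQ, ← ih hTp,
      ENNReal.tsum_prod', ← ENNReal.tsum_geometric, ← ENNReal.tsum_mul_right]
    refine tsum_congr fun n => ?_
    rw [← ENNReal.tsum_mul_left]
    refine tsum_congr fun I => ?_
    simp [e]

theorem prod_one_add {ι : Type*} (T : Finset ι) (x : ι → ENNReal) :
    1 + ∑ i ∈ T, x i ≤ ∏ i ∈ T, (1 - x i)⁻¹ := by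
  classical
  induction T using Finset.induction_on with
  | empty => simp
  | insert a T ha ih =>
    rw [Finset.sum_insert ha, Finset.prod_insert ha]
    have h1 : 1 + x a ≤ (1 - x a)⁻¹ := by
      rw [← ENNReal.tsum_geometric]
      simpa [Finset.sum_range_succ] using ENNReal.sum_le_tsum (f := fun n => x a ^ n) (Finset.range 2)
    calc 1 + (x a + ∑ i ∈ T, x i) ≤ (1 + x a) * (1 + ∑ i ∈ T, x i) := by
          have : (1 + x a) * (1 + ∑ i ∈ T, x i) = 1 + (x a + ∑ i ∈ T, x i) + x a * ∑ i ∈ T, x i := by ring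
          rw [this]
          exact le_self_add
      _ ≤ _ := mul_le_mul' h1 ih

/-- the weight -/
noncomputable def wt (s : ℝ) : ℕ →* ENNReal where
  toFun n := ENNReal.ofReal ((n : ℝ) ^ (-s))
  map_one' := by simp
  map_mul' a b := by
    push_cast
    rw [Real.mul_rpow (by positivity) (by positivity), ENNReal.ofReal_mul (by positivity)]

theorem zeta_lim : Tendsto (fun s : ℝ => (s - 1) * (∑' n : ℕ, wt s n).toReal) (𝓝[>] 1) (𝓝 1) := by
  refine tendsto_sub_mul_tsum_nat_rpow.congr fun s => ?_
  rw [ENNReal.tsum_toReal_eq (by simp [wt])]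
  congr 1
  refine tsum_congr fun n => ?_
  simp only [wt, MonoidHom.coe_mk, OneHom.coe_mk]
  rw [ENNReal.toReal_ofReal (by positivity), Real.rpow_neg (by positivity), one_div]

theorem dzeta_lim (K : Type*) [Field K] [NumberField K] :
    Tendsto (fun s : ℝ => (s - 1) * (∑' I : Ideal (𝓞 K), wt s (Ideal.absNorm I)).toReal) (𝓝[>] 1)
      (𝓝 (dedekindZeta_residue K)) := by
  have h := (Complex.continuous_re.tendsto _).comp (tendsto_sub_one_mul_dedekindZeta_nhdsGT K)
  simp only [Complex.ofReal_re] at h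
  refine h.congr' ?_
  filter_upwards [self_mem_nhdsWithin] with s hs
  have hs : 1 < s := hs
  have key : dedekindZeta K s = (((∑' I : Ideal (𝓞 K), wt s (Ideal.absNorm I)).toReal : ℝ) : ℂ) := by
    rw [dedekindZeta, LSeries, ← (Equiv.sigmaFiberEquiv (fun I : Ideal (𝓞 K) => Ideal.absNorm I)).tsum_eq,
      ENNReal.tsum_sigma', ENNReal.tsum_toReal_eq, Complex.ofReal_tsum]
    · refine tsum_congr fun n => ?_
      have : Finite {I : Ideal (𝓞 K) // Ideal.absNorm I = n} := Ideal.finite_setOfPred_absNorm_eq n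
      have := Fintype.ofFinite {I : Ideal (𝓞 K) // Ideal.absNorm I = n}
      have h2 : ∀ b : {I : Ideal (𝓞 K) // Ideal.absNorm I = n}, wt s (Ideal.absNorm b.1) = wt s n := by
        intro b; rw [b.2]
      simp only [Equiv.sigmaFiberEquiv, Equiv.coe_fn_mk, h2]
      rw [tsum_fintype, Finset.sum_const, Finset.card_univ, ← Nat.card_eq_fintype_card]
      rcases eq_or_ne n 0 with rfl | hn
      · simp [wt, Real.zero_rpow (by linarith : -s ≠ 0)]
      · rw [LSeries.term_of_ne_zero hn]
        simp only [wt, MonoidHom.coe_mk, OneHom.coe_mk, nsmul_eq_mul, ENNReal.toReal_mul,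
          ENNReal.toReal_natCast]
        rw [ENNReal.toReal_ofReal (by positivity), Real.rpow_neg (by positivity)]
        push_cast
        rw [Complex.ofReal_cpow (by positivity)]
        simp [div_eq_mul_inv]
    · intro n
      have : Finite {I : Ideal (𝓞 K) // Ideal.absNorm I = n} := Ideal.finite_setOfPred_absNorm_eq n
      have := Fintype.ofFinite {I : Ideal (𝓞 K) // Ideal.absNorm I = n}
      rw [tsum_fintype]
      simp [wt]
  simp only [Function.comp, key]
  rw [← Complex.ofReal_one, ← Complex.ofReal_sub, ← Complex.ofReal_mul, Complex.ofReal_re]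

theorem exponent_ne_zero' {K : Type*} [Field K] [NumberField K] (θ : 𝓞 K) (pb : PowerBasis ℚ K)
    (h : pb.gen = (θ : K)) : RingOfIntegers.exponent θ ≠ 0 := by
  have hint : IsIntegral ℤ pb.gen := h ▸ θ.isIntegral_coe
  have hd : IsIntegral ℤ (Algebra.discr ℚ pb.basis) :=
    Algebra.discr_isIntegral (K := ℚ) (R := ℤ) (b := pb.basis) (by
      intro i; rw [PowerBasis.basis_eq_pow]; exact hint.pow _)
  obtain ⟨d, hd⟩ := IsIntegrallyClosed.isIntegral_iff.1 hd
  have hd0 : d ≠ 0 := by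
    rintro rfl
    exact Algebra.discr_not_zero_of_basis ℚ pb.basis (by simpa using hd.symm)
  have hmem : (d : 𝓞 K) ∈ conductor ℤ θ := by
    rw [mem_conductor_iff]
    intro b
    have h1 := Algebra.discr_mul_isIntegral_mem_adjoin ℚ (R := ℤ) (B := pb) hint (z := (b : K)) b.isIntegral_coe
    rw [← hd, h] at h1
    have h2 : Algebra.adjoin ℤ {(θ : K)} = (Algebra.adjoin ℤ {θ}).map (IsScalarTower.toAlgHom ℤ (𝓞 K) K) := by
      rw [AlgHom.map_adjoin]; simp
    rw [h2] at h1
    obtain ⟨y, hy, hy'⟩ := h1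
    convert! hy
    apply RingOfIntegers.ext
    have hy2 : (y : K) = (algebraMap ℤ ℚ) d • (b : K) := hy'
    rw [hy2]
    simp [Algebra.smul_def]
  rw [RingOfIntegers.exponent]
  intro h0
  rw [Ideal.absNorm_eq_zero_iff] at h0
  have : d ∈ Ideal.under ℤ (conductor ℤ θ) := by
    simpa [Ideal.mem_comap, Ideal.under_def] using hmem
  rw [h0] at this
  exact hd0 (by simpa using this)

theorem kummer {K : Type*} [Field K] [NumberField K] (θ : 𝓞 K) (p : ℕ) (hp : p.Prime)
    (hpe : ¬ p ∣ RingOfIntegers.exponent θ) :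
    ∃ F : {x : ZMod p // ((minpoly ℤ θ).map (Int.castRingHom (ZMod p))).eval x = 0} → Ideal (𝓞 K),
      Function.Injective F ∧ ∀ x, Prime (F x) ∧ Ideal.absNorm (F x) = p := by
  classical
  have := Fact.mk hp
  have hmem : ∀ x : {x : ZMod p // ((minpoly ℤ θ).map (Int.castRingHom (ZMod p))).eval x = 0},
      (X - C x.1) ∈ RingOfIntegers.monicFactorsMod θ p := by
    rintro ⟨x, hx⟩
    rw [RingOfIntegers.monicFactorsMod, Multiset.mem_toFinset]
    have h0 : (minpoly ℤ θ).map (Int.castRingHom (ZMod p)) ≠ 0 :=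
      map_monic_ne_zero (minpoly.monic θ.isIntegral)
    rw [Polynomial.mem_normalizedFactors_iff h0]
    exact ⟨irreducible_X_sub_C x, monic_X_sub_C x, dvd_iff_isRoot.2 hx⟩
  refine ⟨fun x => ((NumberField.Ideal.primesOverSpanEquivMonicFactorsMod hpe).symm ⟨X - C x.1, hmem x⟩ : Ideal (𝓞 K)),
    fun x y h => ?_, fun x => ?_⟩
  · have h1 := (NumberField.Ideal.primesOverSpanEquivMonicFactorsMod hpe).symm.injective (Subtype.ext h)
    have h2 : (X - C x.1 : (ZMod p)[X]) = X - C y.1 := congrArg Subtype.val h1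
    exact Subtype.ext (C_injective (sub_right_injective h2))
  · set P := (NumberField.Ideal.primesOverSpanEquivMonicFactorsMod hpe).symm ⟨X - C x.1, hmem x⟩ with hP
    have hPp : P.1.IsPrime := P.2.1
    have hPo : P.1.LiesOver (Ideal.span {(p : ℤ)}) := P.2.2
    have hN := Ideal.absNorm_eq_pow_inertiaDeg' P.1 hp
    have hdeg := NumberField.Ideal.inertiaDeg_primesOverSpanEquivMonicFactorsMod_symm_apply' hpe (hmem x)
    rw [natDegree_X_sub_C] at hdeg
    rw [← hP] at hdeg
    have hN' : Ideal.absNorm P.1 = p := by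
      rw [hN, Ideal.inertiaDeg'_eq_inertiaDeg, hdeg, pow_one]
    refine ⟨Ideal.prime_of_isPrime ?_ hPp, hN'⟩
    intro h
    change P.1 = ⊥ at h
    rw [h, Ideal.absNorm_bot] at hN'
    exact hp.ne_zero hN'.symm

theorem exists_fields (f : Polynomial ℤ) (hmon : f.Monic) (hirr : Irreducible f) (hdeg : 2 ≤ f.natDegree) :
    (∃ (K : Type) (_ : Field K) (_ : NumberField K) (θ : 𝓞 K), minpoly ℤ θ = f ∧ RingOfIntegers.exponent θ ≠ 0) ∧
    (∃ (L : Type) (_ : Field L) (_ : NumberField L) (α β : 𝓞 L), α ≠ β ∧ aeval α f = 0 ∧ aeval β f = 0) := by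
  have hirr' : Irreducible (f.map (algebraMap ℤ ℚ)) := (hmon.irreducible_iff_irreducible_map_fraction_map).1 hirr
  have hint : ∀ (K : Type) [Field K] [NumberField K] (x : K), eval₂ (Int.castRingHom K) x f = 0 →
      ∃ θ : 𝓞 K, (θ : K) = x ∧ aeval θ f = 0 := by
    intro K _ _ x hx
    obtain ⟨θ, rfl⟩ : ∃ θ : 𝓞 K, (θ : K) = x := ⟨⟨x, f, hmon, hx⟩, rfl⟩
    refine ⟨θ, rfl, ?_⟩
    apply RingOfIntegers.coe_injective
    rw [map_zero, ← hx, aeval_def, hom_eval₂]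
    congr 1
  constructor
  · have := Fact.mk hirr'
    let pb := AdjoinRoot.powerBasis hirr'.ne_zero
    have : FiniteDimensional ℚ (AdjoinRoot (f.map (algebraMap ℤ ℚ))) := pb.finite
    have : NumberField (AdjoinRoot (f.map (algebraMap ℤ ℚ))) := { }
    obtain ⟨θ, h1, h2⟩ := hint (AdjoinRoot (f.map (algebraMap ℤ ℚ))) (AdjoinRoot.root _) (by
      have h3 := AdjoinRoot.eval₂_root (f.map (algebraMap ℤ ℚ))
      rw [eval₂_map] at h3
      convert! h3 using 2)
    refine ⟨AdjoinRoot (f.map (algebraMap ℤ ℚ)), inferInstance, inferInstance, θ, ?_,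
      exponent_ne_zero' θ pb (by rw [h1]; exact AdjoinRoot.powerBasis_gen _)⟩
    have hd := minpoly.isIntegrallyClosed_dvd θ.isIntegral h2
    have hm := minpoly.monic θ.isIntegral
    refine eq_of_monic_of_associated hm hmon ((hirr.dvd_iff.1 hd).resolve_left ?_).symm
    exact fun h => (minpoly.irreducible θ.isIntegral).not_isUnit h
  · have : NumberField (f.map (algebraMap ℤ ℚ)).SplittingField := { }
    have hc := card_rootSet_eq_natDegree hirr'.separable (SplittingField.splits (f.map (algebraMap ℤ ℚ)))
    rw [natDegree_map_eq_of_injective (algebraMap ℤ ℚ).injective_int] at hc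
    have h2 : 1 < Fintype.card ((f.map (algebraMap ℤ ℚ)).rootSet (f.map (algebraMap ℤ ℚ)).SplittingField) := by
      refine lt_of_lt_of_le ?_ hc.ge |>.trans_eq ?_
      · omega
      · congr 1
    have hroot : ∀ a ∈ (f.map (algebraMap ℤ ℚ)).rootSet (f.map (algebraMap ℤ ℚ)).SplittingField,
        eval₂ (Int.castRingHom _) a f = 0 := by
      intro a ha
      have h3 := (mem_rootSet.1 ha).2
      rw [aeval_def, eval₂_map] at h3
      convert! h3 using 2
    obtain ⟨a, b, hab⟩ := Fintype.one_lt_card_iff.1 h2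
    obtain ⟨α, ha, ha'⟩ := hint _ a.1 (hroot _ a.2)
    obtain ⟨β, hb, hb'⟩ := hint _ b.1 (hroot _ b.2)
    refine ⟨_, inferInstance, this, α, β, ?_, ha', hb'⟩
    rintro rfl
    exact hab (Subtype.ext (ha.symm.trans hb))

theorem two_roots {L : Type*} [Field L] [NumberField L] (f : ℤ[X]) (α β : 𝓞 L) (hα : aeval α f = 0)
    (hβ : aeval β f = 0) (p : ℕ) (hp : p.Prime) (hpd : ¬ p ∣ Ideal.absNorm (Ideal.span {α - β}))
    (Q : Ideal (𝓞 L)) (hN : Ideal.absNorm Q = p) :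
    ∃ a b : ZMod p, a ≠ b ∧ (f.map (Int.castRingHom (ZMod p))).eval a = 0 ∧
      (f.map (Int.castRingHom (ZMod p))).eval b = 0 := by
  have := Fact.mk hp
  have hcard : Nat.card (𝓞 L ⧸ Q) = p := by rw [← hN, Ideal.absNorm_apply]; rfl
  have : Finite (𝓞 L ⧸ Q) := Nat.finite_of_card_ne_zero (by rw [hcard]; exact hp.ne_zero)
  have := Fintype.ofFinite (𝓞 L ⧸ Q)
  have e : (ZMod p) ≃+* (𝓞 L ⧸ Q) := ZMod.ringEquivOfPrime _ hp (by rw [← hcard, Nat.card_eq_fintype_card])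
  have key : ∀ γ : 𝓞 L, aeval γ f = 0 →
      (f.map (Int.castRingHom (ZMod p))).eval (e.symm (Ideal.Quotient.mk Q γ)) = 0 := by
    intro γ hγ
    rw [aeval_def] at hγ
    have := congrArg (e.symm.toRingHom.comp (Ideal.Quotient.mk Q)) hγ
    rw [hom_eval₂, map_zero] at this
    rw [eval_map]
    convert! this using 2
    exact RingHom.ext_int _ _
  refine ⟨_, _, ?_, key α hα, key β hβ⟩
  intro h
  have h := e.symm.injective h
  rw [Ideal.Quotient.mk_eq_mk_iff_sub_mem] at h
  apply hpd
  rw [← hN]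
  exact Ideal.absNorm_dvd_absNorm_of_le (by rwa [Ideal.span_singleton_le_iff_mem])

theorem euler_le {M : Type*} [CommMonoidWithZero M] [Nontrivial M] [UniqueFactorizationMonoid M]
    [Subsingleton Mˣ] (w : M →* ENNReal) (hw : w 0 = 0) (C : ENNReal)
    (h : ∀ T : Finset M, (∀ P ∈ T, Prime P) → ∏ P ∈ T, (1 - w P)⁻¹ ≤ C) : ∑' I, w I ≤ C := by
  classical
  rw [ENNReal.tsum_eq_iSup_sum]
  refine iSup_le fun F => ?_
  let T : Finset M := (F.biUnion fun I => (UniqueFactorizationMonoid.factors I).toFinset)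
  have hT : ∀ P ∈ T, Prime P := by
    intro P hP
    simp only [T, Finset.mem_biUnion, Multiset.mem_toFinset] at hP
    obtain ⟨I, -, hI⟩ := hP
    exact UniqueFactorizationMonoid.prime_of_factor P hI
  refine le_trans ?_ (h T hT)
  rw [← euler_finset w T hT]
  have hF : ∑ I ∈ F, w I = ∑ I ∈ F.filter (· ≠ 0), w I := by
    rw [Finset.sum_filter_of_ne]
    rintro x - hx rfl
    exact hx hw
  rw [hF, ← Finset.tsum_subtype]
  let g : {x // x ∈ F.filter (· ≠ 0)} → {I : M // I ≠ 0 ∧ ∀ P, Prime P → P ∣ I → P ∈ T} := fun x =>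
    ⟨x.1, (Finset.mem_filter.1 x.2).2, fun P hP hd => by
      obtain ⟨q, hq, hqa⟩ := UniqueFactorizationMonoid.exists_mem_factors_of_dvd
        (Finset.mem_filter.1 x.2).2 hP.irreducible hd
      rw [associated_iff_eq] at hqa
      subst hqa
      simp only [T, Finset.mem_biUnion, Multiset.mem_toFinset]
      exact ⟨x.1, (Finset.mem_filter.1 x.2).1, hq⟩⟩
  have hg : Function.Injective g := fun x y hxy => Subtype.ext (congrArg (fun z => z.1) hxy)
  exact ENNReal.tsum_comp_le_tsum_of_injective hg (fun I => w I.1)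

theorem euler_ge {M : Type*} [CommMonoidWithZero M] [Nontrivial M] [UniqueFactorizationMonoid M]
    [Subsingleton Mˣ] (w : M →* ENNReal) (T : Finset M) (hT : ∀ P ∈ T, Prime P) :
    ∏ P ∈ T, (1 - w P)⁻¹ ≤ ∑' I, w I := by
  rw [← euler_finset w T hT]
  exact ENNReal.tsum_comp_le_tsum_of_injective Subtype.val_injective w

theorem wt_zero {s : ℝ} (hs : 1 < s) : wt s 0 = 0 := by
  simp [wt, Real.zero_rpow (by linarith : -s ≠ 0)]

theorem wt_le_inv {s : ℝ} (hs : 1 < s) {n : ℕ} (hn : 2 ≤ n) : (n : ℝ) ^ (-s) ≤ (n : ℝ)⁻¹ := by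
  rw [← Real.rpow_neg_one]
  exact Real.rpow_le_rpow_of_exponent_le (by exact_mod_cast (by omega : 1 ≤ n)) (by linarith)

theorem factor_le {s : ℝ} (hs : 1 < s) {n : ℕ} (hn : 2 ≤ n) :
    (1 - wt s n)⁻¹ ≤ ENNReal.ofReal (1 + 2 * (n : ℝ)⁻¹) := by
  have h1 := wt_le_inv hs hn
  have h2 : (n : ℝ)⁻¹ ≤ 1 / 2 := by
    rw [one_div]
    exact inv_anti₀ (by norm_num) (by exact_mod_cast hn)
  have h0 : 0 ≤ (n : ℝ) ^ (-s) := by positivity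
  simp only [wt, MonoidHom.coe_mk, OneHom.coe_mk]
  rw [← ENNReal.ofReal_one, ← ENNReal.ofReal_sub _ h0, ← ENNReal.ofReal_inv_of_pos (by linarith)]
  apply ENNReal.ofReal_le_ofReal
  rw [inv_le_iff_one_le_mul₀ (by linarith)]
  nlinarith

theorem one_le_factor (x : ENNReal) : 1 ≤ (1 - x)⁻¹ := by
  rw [ENNReal.one_le_inv]; exact tsub_le_self

/-- The weight on ideals. -/
noncomputable def iwt (K : Type*) [Field K] [NumberField K] (s : ℝ) : Ideal (𝓞 K) →* ENNReal :=
  (wt s).comp (Ideal.absNorm : Ideal (𝓞 K) →*₀ ℕ).toMonoidHom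

theorem iwt_apply (K : Type*) [Field K] [NumberField K] (s : ℝ) (I : Ideal (𝓞 K)) :
    iwt K s I = wt s (Ideal.absNorm I) := rfl

theorem two_le_norm {K : Type*} [Field K] [NumberField K] {P : Ideal (𝓞 K)} (hP : Prime P) :
    2 ≤ Ideal.absNorm P := by
  have h0 : Ideal.absNorm P ≠ 0 := by
    rw [Ne, Ideal.absNorm_eq_zero_iff]; exact hP.ne_zero
  have h1 : Ideal.absNorm P ≠ 1 := by
    rw [Ne, Ideal.absNorm_eq_one_iff]; exact (Ideal.isPrime_of_prime hP).ne_top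
  omega

/-- The sum of inverses of norms of primes diverges. -/
theorem diverge (L : Type*) [Field L] [NumberField L] (C : ℝ)
    (h : ∀ T : Finset (Ideal (𝓞 L)), (∀ Q ∈ T, Prime Q) → ∑ Q ∈ T, (Ideal.absNorm Q : ℝ)⁻¹ ≤ C) :
    False := by
  have hb : ∀ s : ℝ, 1 < s → (∑' I : Ideal (𝓞 L), wt s (Ideal.absNorm I)).toReal ≤ Real.exp (2 * C) := by
    intro s hs
    refine ENNReal.toReal_le_of_le_ofReal (Real.exp_pos _).le ?_
    refine euler_le (iwt L s) (by rw [iwt_apply]; simpa using wt_zero hs) _ fun T hT => ?_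
    calc ∏ P ∈ T, (1 - iwt L s P)⁻¹ ≤ ∏ P ∈ T, ENNReal.ofReal (Real.exp (2 * (Ideal.absNorm P : ℝ)⁻¹)) := by
          refine Finset.prod_le_prod' fun P hP => ?_
          rw [iwt_apply]
          refine (factor_le hs (two_le_norm (hT P hP))).trans (ENNReal.ofReal_le_ofReal ?_)
          rw [add_comm]; exact Real.add_one_le_exp _
      _ = ENNReal.ofReal (Real.exp (∑ P ∈ T, 2 * (Ideal.absNorm P : ℝ)⁻¹)) := by
          rw [Real.exp_sum, ENNReal.ofReal_prod_of_nonneg (fun _ _ => (Real.exp_pos _).le)]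
      _ ≤ _ := by
          apply ENNReal.ofReal_le_ofReal
          rw [← Finset.mul_sum]
          exact Real.exp_le_exp.2 (by linarith [h T hT])
  have h1 := dzeta_lim L
  have h2 : Tendsto (fun s : ℝ => (s - 1) * Real.exp (2 * C)) (𝓝[>] 1) (𝓝 0) := by
    have : Tendsto (fun s : ℝ => (s - 1) * Real.exp (2 * C)) (𝓝 1) (𝓝 ((1 - 1) * Real.exp (2 * C))) :=
      Continuous.tendsto (by fun_prop) 1
    rw [sub_self, zero_mul] at this
    exact this.mono_left nhdsWithin_le_nhds
  have h3 := le_of_tendsto_of_tendsto h1 h2 (by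
    filter_upwards [self_mem_nhdsWithin] with s hs
    have hs : 1 < s := hs
    exact mul_le_mul_of_nonneg_left (hb s hs) (by linarith))
  linarith [dedekindZeta_residue_pos L]

theorem claim_one (K : Type*) [Field K] [NumberField K] (B : Finset ℕ) (S : Set ℕ)
    (h1 : ∀ p : ℕ, p.Prime → p ∉ B → ∃ P : Ideal (𝓞 K), Prime P ∧ Ideal.absNorm P = p)
    (h2 : ∀ p : ℕ, p.Prime → p ∉ B → p ∈ S → ∃ P P' : Ideal (𝓞 K), P ≠ P' ∧
      (Prime P ∧ Ideal.absNorm P = p) ∧ (Prime P' ∧ Ideal.absNorm P' = p))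
    (s : ℝ) (hs : 1 < s) (T' : Finset ℕ) (hT' : ∀ p ∈ T', p.Prime ∧ p ∉ B ∧ p ∈ S) :
    (∑' n, wt s n) * (1 + ∑ p ∈ T', wt s p) ≤ 2 ^ B.card * ∑' I : Ideal (𝓞 K), wt s (Ideal.absNorm I) := by
  classical
  have hex : ∀ p : ℕ, ∃ P P' : Ideal (𝓞 K), p.Prime → p ∉ B →
      ((Prime P ∧ Ideal.absNorm P = p) ∧ (p ∈ S → P ≠ P' ∧ Prime P' ∧ Ideal.absNorm P' = p)) := by
    intro p
    by_cases hp : p.Prime ∧ p ∉ B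
    · by_cases hS : p ∈ S
      · obtain ⟨P, P', a, b, c⟩ := h2 p hp.1 hp.2 hS
        exact ⟨P, P', fun _ _ => ⟨b, fun _ => ⟨a, c⟩⟩⟩
      · obtain ⟨P, b⟩ := h1 p hp.1 hp.2
        exact ⟨P, P, fun _ _ => ⟨b, fun h => (hS h).elim⟩⟩
    · exact ⟨⊥, ⊥, fun a b => (hp ⟨a, b⟩).elim⟩
  choose P P' hPP using hex
  -- reduce to finite products
  have hmain : ∀ T : Finset ℕ, (∀ p ∈ T, Prime p) →
      (∏ p ∈ T, (1 - wt s p)⁻¹) * (1 + ∑ p ∈ T', wt s p) ≤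
        2 ^ B.card * ∑' I : Ideal (𝓞 K), wt s (Ideal.absNorm I) := by
    intro T hT
    have hT : ∀ p ∈ T, p.Prime := fun p hp => (hT p hp).nat_prime
    have hT2 : ∀ p ∈ T \ B, p.Prime ∧ p ∉ B := fun p hp => by
      rw [Finset.mem_sdiff] at hp; exact ⟨hT p hp.1, hp.2⟩
    have hA : ∏ p ∈ T, (1 - wt s p)⁻¹ ≤ 2 ^ B.card * ∏ p ∈ T \ B, (1 - wt s p)⁻¹ := by
      rw [← Finset.prod_sdiff (Finset.inter_subset_left : T ∩ B ⊆ T), Finset.sdiff_inter_self_left, mul_comm]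
      gcongr
      calc ∏ p ∈ T ∩ B, (1 - wt s p)⁻¹ ≤ 2 ^ (T ∩ B).card := by
            apply Finset.prod_le_pow_card
            intro p hp
            have hp2 := (hT p (Finset.mem_inter.1 hp).1).two_le
            refine (factor_le hs hp2).trans ?_
            rw [ENNReal.ofReal_le_iff_le_toReal (by simp)]
            have : (p : ℝ)⁻¹ ≤ 1 / 2 := by
              rw [one_div]; exact inv_anti₀ (by norm_num) (by exact_mod_cast hp2)
            norm_num
            linarith
        _ ≤ 2 ^ B.card := pow_le_pow_right₀ (by norm_num) (Finset.card_le_card Finset.inter_subset_right)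
    have hB := prod_one_add T' (fun p => wt s p)
    let U := (T \ B).image P ∪ T'.image P'
    have hU : ∀ Q ∈ U, Prime Q := by
      intro Q hQ
      simp only [U, Finset.mem_union, Finset.mem_image] at hQ
      rcases hQ with ⟨p, hp, rfl⟩ | ⟨p, hp, rfl⟩
      · exact (hPP p (hT2 p hp).1 (hT2 p hp).2).1.1
      · obtain ⟨a, b, c⟩ := hT' p hp
        exact ((hPP p a b).2 c).2.1
    have hdis : Disjoint ((T \ B).image P) (T'.image P') := by
      rw [Finset.disjoint_left]
      intro Q h h'
      rw [Finset.mem_image] at h h'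
      obtain ⟨p, hp, rfl⟩ := h
      obtain ⟨q, hq, hqp⟩ := h'
      obtain ⟨a, b, c⟩ := hT' q hq
      have n1 := (hPP p (hT2 p hp).1 (hT2 p hp).2).1.2
      have n2 := ((hPP q a b).2 c).2.2
      rw [hqp, n1] at n2
      subst n2
      exact ((hPP p a b).2 c).1 hqp.symm
    have hprod : ∏ Q ∈ U, (1 - iwt K s Q)⁻¹ = (∏ p ∈ T \ B, (1 - wt s p)⁻¹) * ∏ p ∈ T', (1 - wt s p)⁻¹ := by
      rw [Finset.prod_union hdis, Finset.prod_image, Finset.prod_image]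
      · congr 1
        · refine Finset.prod_congr rfl fun p hp => ?_
          rw [iwt_apply, (hPP p (hT2 p hp).1 (hT2 p hp).2).1.2]
        · refine Finset.prod_congr rfl fun p hp => ?_
          obtain ⟨a, b, c⟩ := hT' p hp
          rw [iwt_apply, ((hPP p a b).2 c).2.2]
      · intro p hp q hq hpq
        obtain ⟨a, b, c⟩ := hT' p hp
        obtain ⟨a', b', c'⟩ := hT' q hq
        rw [← ((hPP p a b).2 c).2.2, ← ((hPP q a' b').2 c').2.2, hpq]
      · intro p hp q hq hpq
        rw [← (hPP p (hT2 p hp).1 (hT2 p hp).2).1.2, ← (hPP q (hT2 q hq).1 (hT2 q hq).2).1.2, hpq]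
    calc _ ≤ (2 ^ B.card * ∏ p ∈ T \ B, (1 - wt s p)⁻¹) * ∏ p ∈ T', (1 - wt s p)⁻¹ := mul_le_mul' hA hB
      _ = 2 ^ B.card * ∏ Q ∈ U, (1 - iwt K s Q)⁻¹ := by rw [hprod, mul_assoc]
      _ ≤ _ := by gcongr; exact euler_ge (iwt K s) U hU
  have hne : (1 + ∑ p ∈ T', wt s p) ≠ 0 := by simp
  have hnt : (1 + ∑ p ∈ T', wt s p) ≠ ⊤ := by simp [wt]
  rw [← ENNReal.le_div_iff_mul_le (Or.inl hne) (Or.inl hnt)]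
  refine euler_le (wt s) (wt_zero hs) _ fun T hT => ?_
  rw [ENNReal.le_div_iff_mul_le (Or.inl hne) (Or.inl hnt)]
  exact hmain T hT

theorem bounded_S (K : Type*) [Field K] [NumberField K] (B : Finset ℕ) (S : Set ℕ)
    (h1 : ∀ p : ℕ, p.Prime → p ∉ B → ∃ P : Ideal (𝓞 K), Prime P ∧ Ideal.absNorm P = p)
    (h2 : ∀ p : ℕ, p.Prime → p ∉ B → p ∈ S → ∃ P P' : Ideal (𝓞 K), P ≠ P' ∧
      (Prime P ∧ Ideal.absNorm P = p) ∧ (Prime P' ∧ Ideal.absNorm P' = p)) :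
    ∃ D : ℝ, 0 ≤ D ∧ ∀ T' : Finset ℕ, (∀ p ∈ T', p.Prime ∧ p ∉ B ∧ p ∈ S) →
      ∑ p ∈ T', (p : ℝ)⁻¹ ≤ D := by
  set ρ := dedekindZeta_residue K with hρ
  have hρ0 : 0 < ρ := dedekindZeta_residue_pos K
  refine ⟨2 ^ B.card * (2 * (ρ + 1)), by positivity, fun T' hT' => ?_⟩
  have hlim : Tendsto (fun s : ℝ => ∑ p ∈ T', (p : ℝ) ^ (-s)) (𝓝[>] 1) (𝓝 (∑ p ∈ T', (p : ℝ)⁻¹)) := by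
    refine tendsto_finsetSum _ fun p hp => ?_
    have hp0 : (p : ℝ) ≠ 0 := by exact_mod_cast (hT' p hp).1.ne_zero
    have : Tendsto (fun s : ℝ => (p : ℝ) ^ (-s)) (𝓝 1) (𝓝 ((p : ℝ) ^ (-1 : ℝ))) :=
      Tendsto.rpow tendsto_const_nhds (tendsto_id.neg) (Or.inl hp0)
    rw [Real.rpow_neg_one] at this
    exact this.mono_left nhdsWithin_le_nhds
  refine le_of_tendsto hlim ?_
  filter_upwards [self_mem_nhdsWithin, zeta_lim.eventually (lt_mem_nhds (by norm_num : (1 / 2 : ℝ) < 1)),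
    (dzeta_lim K).eventually (gt_mem_nhds (by linarith : ρ < ρ + 1)),
    (dzeta_lim K).eventually (lt_mem_nhds hρ0)] with s hs hz hk hk0
  have hs : 1 < s := hs
  have hc := claim_one K B S h1 h2 s hs T' hT'
  set z := ∑' n, wt s n
  set k := ∑' I : Ideal (𝓞 K), wt s (Ideal.absNorm I)
  have hkt : k ≠ ⊤ := by
    intro h; rw [h] at hk0; simp at hk0
  have hc' := ENNReal.toReal_mono (ENNReal.mul_ne_top (by simp) hkt) hc
  have hsum : (1 + ∑ p ∈ T', wt s p).toReal = 1 + ∑ p ∈ T', (p : ℝ) ^ (-s) := by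
    rw [ENNReal.toReal_add (by simp) (by simp [wt]), ENNReal.toReal_sum (by simp [wt])]
    congr 1
    refine Finset.sum_congr rfl fun p _ => ?_
    simp only [wt, MonoidHom.coe_mk, OneHom.coe_mk]
    rw [ENNReal.toReal_ofReal (by positivity)]
  rw [ENNReal.toReal_mul, ENNReal.toReal_mul, hsum, ENNReal.toReal_pow] at hc'
  simp only [ENNReal.toReal_ofNat] at hc'
  have hs1 : 0 < s - 1 := by linarith
  have hz0 : 0 < z.toReal := by
    by_contra hcon
    have : (s - 1) * z.toReal ≤ 0 := mul_nonpos_of_nonneg_of_nonpos hs1.le (not_lt.1 hcon)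
    linarith
  have hkz : k.toReal ≤ 2 * (ρ + 1) * z.toReal := by
    have : (s - 1) * k.toReal ≤ (s - 1) * (2 * (ρ + 1) * z.toReal) := by nlinarith
    exact le_of_mul_le_mul_left this hs1
  have hfin : z.toReal * (1 + ∑ p ∈ T', (p : ℝ) ^ (-s)) ≤ z.toReal * (2 ^ B.card * (2 * (ρ + 1))) := by
    refine hc'.trans ?_
    have := mul_le_mul_of_nonneg_left hkz (by positivity : (0 : ℝ) ≤ 2 ^ B.card)
    linarith
  have := le_of_mul_le_mul_left hfin hz0
  linarith

theorem card_above {L : Type*} [Field L] [NumberField L] (p : ℕ) (hp : p.Prime) (T : Finset (Ideal (𝓞 L)))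
    (hT : ∀ Q ∈ T, Prime Q ∧ (p : 𝓞 L) ∈ Q ∧ p ∣ Ideal.absNorm Q) : T.card ≤ Module.finrank ℚ L := by
  have h1 : ∏ Q ∈ T, Q ∣ Ideal.span {(p : 𝓞 L)} := by
    refine Finset.prod_primes_dvd _ (fun Q hQ => (hT Q hQ).1) fun Q hQ => ?_
    rw [Ideal.dvd_span_singleton]; exact (hT Q hQ).2.1
  have h2 := map_dvd Ideal.absNorm h1
  rw [map_prod, Ideal.absNorm_span_singleton] at h2
  have h3 : (Algebra.norm ℤ (p : 𝓞 L)).natAbs = p ^ Module.finrank ℚ L := by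
    have := Algebra.norm_algebraMap_of_basis (RingOfIntegers.basis L) (p : ℤ)
    rw [← Module.finrank_eq_card_basis (RingOfIntegers.basis L), RingOfIntegers.rank] at this
    simp only [algebraMap_int_eq, eq_intCast, Int.cast_natCast] at this
    rw [this, Int.natAbs_pow, Int.natAbs_natCast]
  rw [h3] at h2
  have h4 : p ^ T.card ∣ ∏ Q ∈ T, Ideal.absNorm Q := by
    rw [← Finset.prod_const]
    exact Finset.prod_dvd_prod_of_dvd _ _ fun Q hQ => (hT Q hQ).2.2
  exact (Nat.pow_dvd_pow_iff_le_right hp.one_lt).1 (h4.trans h2)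

theorem analytic (K L : Type*) [Field K] [NumberField K] [Field L] [NumberField L] (B : Finset ℕ)
    (h1 : ∀ p : ℕ, p.Prime → p ∉ B → ∃ P : Ideal (𝓞 K), Prime P ∧ Ideal.absNorm P = p)
    (h2 : ∀ p : ℕ, p.Prime → p ∉ B → (∃ Q : Ideal (𝓞 L), Prime Q ∧ Ideal.absNorm Q = p) →
      ∃ P P' : Ideal (𝓞 K), P ≠ P' ∧
      (Prime P ∧ Ideal.absNorm P = p) ∧ (Prime P' ∧ Ideal.absNorm P' = p)) : False := by
  classical
  set S : Set ℕ := {p | ∃ Q : Ideal (𝓞 L), Prime Q ∧ Ideal.absNorm Q = p} with hS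
  obtain ⟨D, hD0, hD⟩ := bounded_S K B S h1 h2
  have hex : ∀ Q : Ideal (𝓞 L), ∃ p n : ℕ, Prime Q → 0 < n ∧ (p : 𝓞 L) ∈ Q ∧ p.Prime ∧ Ideal.absNorm Q = p ^ n := by
    intro Q
    by_cases hQ : Prime Q
    · have := Ideal.isPrime_of_prime hQ
      have : Q.IsMaximal := this.isMaximal hQ.ne_zero
      obtain ⟨p, n, h⟩ := Ideal.exists_prime_and_absNorm_eq_pow Q
      exact ⟨p, n, fun _ => h⟩
    · exact ⟨0, 0, fun h => (hQ h).elim⟩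
  choose pp nn hpn using hex
  have hsm : Summable (fun n : ℕ => ((n : ℝ) ^ 2)⁻¹) := Real.summable_nat_pow_inv.2 (by norm_num)
  refine diverge L (Module.finrank ℚ L * ((B.card + D) + ∑' n : ℕ, ((n : ℝ) ^ 2)⁻¹)) fun T hT => ?_
  let g : ℕ → ℝ := fun p => (if p ∈ S then (p : ℝ)⁻¹ else 0) + ((p : ℝ) ^ 2)⁻¹
  have hg : ∀ Q ∈ T, (Ideal.absNorm Q : ℝ)⁻¹ ≤ g (pp Q) := by
    intro Q hQ
    obtain ⟨a, b, c, d⟩ := hpn Q (hT Q hQ)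
    have hp1 : (1 : ℝ) ≤ pp Q := by exact_mod_cast c.one_le
    by_cases hn : nn Q = 1
    · have : pp Q ∈ S := ⟨Q, hT Q hQ, by rw [d, hn, pow_one]⟩
      simp only [g, if_pos this]
      rw [d, hn, pow_one]
      have : 0 ≤ ((pp Q : ℝ) ^ 2)⁻¹ := by positivity
      linarith
    · have h3 : ((Ideal.absNorm Q : ℕ) : ℝ)⁻¹ ≤ ((pp Q : ℝ) ^ 2)⁻¹ := by
        rw [d]; push_cast
        exact inv_anti₀ (by positivity) (pow_le_pow_right₀ hp1 (by omega))
      have h4 : (0 : ℝ) ≤ if pp Q ∈ S then (pp Q : ℝ)⁻¹ else 0 := by split_ifs <;> positivity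
      simp only [g]
      linarith
  have hg0 : ∀ p, 0 ≤ g p := by
    intro p
    simp only [g]
    split_ifs <;> positivity
  have hpr : ∀ p ∈ T.image pp, p.Prime := by
    intro p hp
    obtain ⟨Q, hQ, rfl⟩ := Finset.mem_image.1 hp
    exact (hpn Q (hT Q hQ)).2.2.1
  calc ∑ Q ∈ T, (Ideal.absNorm Q : ℝ)⁻¹ ≤ ∑ Q ∈ T, g (pp Q) := Finset.sum_le_sum hg
    _ = ∑ p ∈ T.image pp, ((T.filter fun Q => pp Q = p).card : ℝ) * g p := by
        rw [Finset.sum_comp]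
        simp
    _ ≤ ∑ p ∈ T.image pp, (Module.finrank ℚ L : ℝ) * g p := by
        refine Finset.sum_le_sum fun p hp => mul_le_mul_of_nonneg_right ?_ (hg0 p)
        norm_cast
        refine card_above p (hpr p hp) _ fun Q hQ => ?_
        obtain ⟨hQT, rfl⟩ := Finset.mem_filter.1 hQ
        obtain ⟨a, b, c, d⟩ := hpn Q (hT Q hQT)
        exact ⟨hT Q hQT, b, d ▸ dvd_pow_self _ a.ne'⟩
    _ = Module.finrank ℚ L * ∑ p ∈ T.image pp, g p := by rw [Finset.mul_sum]
    _ ≤ _ := by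
        refine mul_le_mul_of_nonneg_left ?_ (by positivity)
        simp only [g]
        rw [Finset.sum_add_distrib]
        refine add_le_add ?_ (hsm.sum_le_tsum _ fun _ _ => by positivity)
        rw [← Finset.sum_filter]
        set A := (T.image pp).filter (· ∈ S)
        have hA : ∀ p ∈ A, p.Prime ∧ p ∈ S := fun p hp =>
          ⟨hpr p (Finset.mem_filter.1 hp).1, (Finset.mem_filter.1 hp).2⟩
        rw [← Finset.sum_filter_add_sum_filter_not A (· ∈ B)]
        refine add_le_add ?_ (hD _ ?_)
        · calc _ ≤ ∑ p ∈ A.filter (· ∈ B), (1 : ℝ) := Finset.sum_le_sum fun p _ => Nat.cast_inv_le_one p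
            _ ≤ B.card := by
              simp only [Finset.sum_const, nsmul_eq_mul, mul_one]
              norm_cast
              exact Finset.card_le_card fun p hp => (Finset.mem_filter.1 hp).2
        · intro p hp
          obtain ⟨h, h'⟩ := Finset.mem_filter.1 hp
          exact ⟨(hA p h).1, h', (hA p h).2⟩

/-- A monic irreducible integer polynomial of degree at least 2 has no root
modulo infinitely many primes. -/
theorem irreducible_rootless_mod_infinitely_many_primes (f : Polynomial ℤ)
    (hmon : f.Monic) (hirr : Irreducible f) (hdeg : 2 ≤ f.natDegree) :
    {p : ℕ | p.Prime ∧ ∀ x : ZMod p, (f.map (Int.castRingHom (ZMod p))).eval x ≠ 0}.Infinite := by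
  classical
  intro hfin
  obtain ⟨⟨K, _, _, θ, hθ, he⟩, ⟨L, _, _, α, β, hne, hα, hβ⟩⟩ := exists_fields f hmon hirr hdeg
  have hd : Ideal.absNorm (Ideal.span {α - β}) ≠ 0 := by
    rw [Ne, Ideal.absNorm_eq_zero_iff, Ideal.span_singleton_eq_bot]
    exact sub_ne_zero.2 hne
  let B : Finset ℕ := hfin.toFinset ∪ (RingOfIntegers.exponent θ).primeFactors ∪
    (Ideal.absNorm (Ideal.span {α - β})).primeFactors
  have hB : ∀ p : ℕ, p.Prime → p ∉ B → (∃ x : ZMod p, (f.map (Int.castRingHom (ZMod p))).eval x = 0) ∧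
      ¬ p ∣ RingOfIntegers.exponent θ ∧ ¬ p ∣ Ideal.absNorm (Ideal.span {α - β}) := by
    intro p hp hpB
    simp only [B, Finset.mem_union, not_or, Set.Finite.mem_toFinset, Set.mem_ofPred_eq,
      Nat.mem_primeFactors, not_and] at hpB
    obtain ⟨⟨a, b⟩, c⟩ := hpB
    refine ⟨?_, fun h => b hp h he, fun h => c hp h hd⟩
    by_contra hcon
    push Not at hcon
    exact a hp hcon
  refine analytic K L B (fun p hp hpB => ?_) (fun p hp hpB hQ => ?_)
  · obtain ⟨⟨x, hx⟩, h2, h3⟩ := hB p hp hpB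
    obtain ⟨F, -, hF⟩ := kummer θ p hp h2
    exact ⟨F ⟨x, by rw [hθ]; exact hx⟩, hF _⟩
  · obtain ⟨-, h2, h3⟩ := hB p hp hpB
    obtain ⟨Q, -, hN⟩ := hQ
    obtain ⟨a, b, hab, ha, hb⟩ := two_roots f α β hα hβ p hp h3 Q hN
    obtain ⟨F, hinj, hF⟩ := kummer θ p hp h2
    refine ⟨F ⟨a, by rw [hθ]; exact ha⟩, F ⟨b, by rw [hθ]; exact hb⟩, fun h => ?_, hF _, hF _⟩
    exact hab (congrArg Subtype.val (hinj h))
end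

section
/- Let p be a prime and let ℓ_1, ..., ℓ_n be distinct primes. Then [ℚ(ℓ_1^{1/p}, ..., ℓ_n^{1/p}) : ℚ] = p^n. -/
open IntermediateField

namespace PthRoots

open Polynomial

lemma trace_zero {F L : Type*} [Field F] [Field L] [Algebra F L] [FiniteDimensional F L]
    {p : ℕ} (hp : p.Prime) (x : L) (c : F) (hx : x ^ p = algebraMap F L c)
    (hirr : Irreducible (X ^ p - C c : F[X])) : Algebra.trace F L x = 0 := by
  have hmin : X ^ p - C c = minpoly F x := by
    apply minpoly.eq_of_irreducible_of_monic hirr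
    · simp [hx]
    · exact monic_X_pow_sub_C c hp.ne_zero
  rw [trace_eq_finrank_mul_minpoly_nextCoeff, ← hmin]
  have : (X ^ p - C c : F[X]).nextCoeff = 0 := by
    rw [nextCoeff_of_natDegree_pos]
    · have h2 := hp.two_le
      rw [natDegree_X_pow_sub_C, coeff_sub, coeff_X_pow, coeff_C]
      rw [if_neg (by omega), if_neg (by omega), sub_zero]
    · rw [natDegree_X_pow_sub_C]; exact hp.pos
  rw [this]; simp

lemma trace_one_ne {F L : Type*} [Field F] [CharZero F] [Field L] [Algebra F L]
    [FiniteDimensional F L] : Algebra.trace F L 1 ≠ 0 := by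
  intro h
  rw [← map_one (algebraMap F L), Algebra.trace_algebraMap] at h
  simp only [nsmul_eq_mul, mul_one, Nat.cast_eq_zero] at h
  exact Module.finrank_pos.ne' h

lemma irr {p : ℕ} (hp : p.Prime) (F : IntermediateField ℚ ℝ) (x : ℝ) (hx : x ∉ F)
    (c : F) (hc : x ^ p = c) : Irreducible (X ^ p - C c : F[X]) := by
  apply X_pow_sub_C_irreducible_of_prime hp
  intro b hb
  apply hx
  have h1 : (b : ℝ) ^ p = x ^ p := by rw [hc, ← hb]; simp
  have h2 : |(b : ℝ)| = |x| := by
    apply (pow_left_inj₀ (abs_nonneg _) (abs_nonneg _) hp.ne_zero).1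
    rw [← abs_pow, ← abs_pow, h1]
  rcases abs_eq_abs.1 h2 with h | h
  · rw [← h]; exact b.2
  · have : x = -b := by rw [h]; ring
    rw [this]; exact F.neg_mem b.2

lemma step {p : ℕ} (hp : p.Prime) (F : IntermediateField ℚ ℝ) (a b : ℝ)
    (ha : a ^ p ∈ F) (hb : b ^ p ∈ F) (hb0 : b ≠ 0)
    (hba : b ∈ IntermediateField.adjoin F {a}) : ∃ i : ℕ, b * a ^ i ∈ F := by
  by_contra! hcon
  have hint : IsIntegral F a := by
    refine ⟨X ^ p - C ⟨a ^ p, ha⟩, monic_X_pow_sub_C _ hp.ne_zero, ?_⟩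
    simp
  have : FiniteDimensional F (IntermediateField.adjoin F {a}) :=
    adjoin.finiteDimensional hint
  set L := IntermediateField.adjoin F {a} with hL
  let b' : L := ⟨b, hba⟩
  let a' : L := ⟨a, mem_adjoin_simple_self F a⟩
  have htr : ∀ i : ℕ, Algebra.trace F L (b' * a' ^ i) = 0 := by
    intro i
    have hm : (b * a ^ i) ^ p ∈ F := by
      rw [mul_pow, ← pow_mul, mul_comm i p, pow_mul]
      exact F.mul_mem hb (F.pow_mem ha i)
    refine trace_zero hp _ ⟨_, hm⟩ ?_ (irr hp F (b * a ^ i) (hcon i) _ rfl)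
    apply Subtype.ext
    rfl
  have hpoly : ∀ P : F[X], Algebra.trace F L (b' * aeval a' P) = 0 := by
    intro P
    induction P using Polynomial.induction_on' with
    | add P Q h1 h2 => rw [map_add, mul_add, map_add, h1, h2, add_zero]
    | monomial n c =>
      rw [aeval_monomial, mul_left_comm, ← Algebra.smul_def, map_smul, htr, smul_zero]
  have hb'0 : b' ≠ 0 := fun h => hb0 (congrArg Subtype.val h)
  have hmem : ((b'⁻¹ : L) : ℝ) ∈ Algebra.adjoin F {a} := by
    rw [← adjoin_simple_toSubalgebra_of_isAlgebraic hint.isAlgebraic]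
    exact (b'⁻¹).2
  rw [Algebra.adjoin_singleton_eq_range_aeval] at hmem
  obtain ⟨P, hP⟩ := hmem
  have hP' : aeval a' P = b'⁻¹ := by
    apply Subtype.ext
    rw [← hP]
    exact (aeval_algebraMap_apply ℝ a' P).symm
  have h := hpoly P
  rw [hP', mul_inv_cancel₀ hb'0] at h
  exact trace_one_ne h

noncomputable def K (a : ℕ → ℝ) (S : Finset ℕ) : IntermediateField ℚ ℝ :=
  IntermediateField.adjoin ℚ (Set.image a S)

lemma K_insert (a : ℕ → ℝ) (S : Finset ℕ) (l : ℕ) :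
    K a (insert l S) = (IntermediateField.adjoin (K a S) {a l}).restrictScalars ℚ := by
  unfold K
  rw [Finset.coe_insert, Set.image_insert_eq, ← Set.union_singleton]
  exact (adjoin_adjoin_left ℚ (Set.image a S) {a l}).symm

lemma kummer_form {p : ℕ} (hp : p.Prime) (a : ℕ → ℝ) (ha : ∀ l, a l ^ p = l)
    (S : Finset ℕ) (hS : ∀ l ∈ S, l ≠ 0) : ∀ b : ℝ, b ≠ 0 → (∃ q : ℚ, b ^ p = q) → b ∈ K a S →
      ∃ e : ℕ → ℕ, ∃ q : ℚ, b * ∏ l ∈ S, a l ^ e l = q := by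
  induction S using Finset.induction_on with
  | empty =>
    intro b hb _ hbK
    simp only [K, Finset.coe_empty, Set.image_empty, adjoin_empty] at hbK
    obtain ⟨q, hq⟩ := mem_bot.1 hbK
    exact ⟨0, q, by simp [← hq]⟩
  | insert l S hl ih =>
    intro b hb hq hbK
    obtain ⟨q, hq⟩ := hq
    rw [K_insert, mem_restrictScalars] at hbK
    obtain ⟨i, hi⟩ := step hp (K a S) (a l) b
      (by rw [ha]; exact IntermediateField.natCast_mem _ _) (by rw [hq]; exact (K a S).algebraMap_mem q) hb hbK
    have hal : a l ≠ 0 := by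
      intro h
      have := ha l
      rw [h, zero_pow hp.ne_zero] at this
      exact hS l (Finset.mem_insert_self _ _) (by exact_mod_cast this.symm)
    obtain ⟨e, r, hr⟩ := ih (fun l h => hS l (Finset.mem_insert_of_mem h)) (b * a l ^ i)
      (mul_ne_zero hb (pow_ne_zero _ hal))
      ⟨q * l ^ i, by
        rw [mul_pow, ← pow_mul, mul_comm i p, pow_mul, ha, hq]; push_cast; rfl⟩ hi
    refine ⟨Function.update e l i, r, ?_⟩
    rw [Finset.prod_insert hl, Function.update_self, ← mul_assoc, ← hr]
    congr 1
    apply Finset.prod_congr rfl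
    intro m hm
    rw [Function.update_of_ne]
    rintro rfl
    exact hl hm

lemma not_mem {p : ℕ} (hp : p.Prime) (a : ℕ → ℝ) (ha : ∀ l, a l ^ p = l)
    (S : Finset ℕ) (hS : ∀ l ∈ S, l.Prime) (l : ℕ) (hl : l.Prime) (hlS : l ∉ S) :
    a l ∉ K a S := by
  intro hmem
  have hal : a l ≠ 0 := by
    intro h
    have := ha l
    rw [h, zero_pow hp.ne_zero] at this
    exact hl.ne_zero (by exact_mod_cast this.symm)
  obtain ⟨e, q, hq⟩ := kummer_form hp a ha S (fun m hm => (hS m hm).ne_zero) (a l) hal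
    ⟨l, by rw [ha]; simp⟩ hmem
  have h1 : (l : ℚ) * ∏ m ∈ S, (m : ℚ) ^ e m = q ^ p := by
    have h2 := congrArg (· ^ p) hq
    simp only [mul_pow, ha, ← Finset.prod_pow] at h2
    have h3 : ∀ m ∈ S, (a m ^ e m) ^ p = (m : ℝ) ^ e m := by
      intro m _
      rw [← pow_mul, mul_comm, pow_mul, ha]
    rw [Finset.prod_congr rfl h3] at h2
    exact_mod_cast h2
  have : Fact l.Prime := ⟨hl⟩
  have hprod : (∏ m ∈ S, m ^ e m) ≠ 0 :=
    Finset.prod_ne_zero_iff.2 fun m hm => pow_ne_zero _ (hS m hm).ne_zero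
  have hnd : ¬ l ∣ ∏ m ∈ S, m ^ e m := by
    intro hd
    obtain ⟨m, hm, hd⟩ := (hl.prime.dvd_finsetProd_iff _).1 hd
    have := (Nat.prime_dvd_prime_iff_eq hl (hS m hm)).1 (hl.dvd_of_dvd_pow hd)
    exact hlS (this ▸ hm)
  have h4 := congrArg (padicValRat l) h1
  have h5 : ((∏ m ∈ S, (m : ℚ) ^ e m)) = ((∏ m ∈ S, m ^ e m : ℕ) : ℚ) := by push_cast; rfl
  rw [h5, padicValRat.mul (by exact_mod_cast hl.ne_zero) (by exact_mod_cast hprod),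
    padicValRat.of_nat, padicValRat.of_nat, padicValNat.eq_zero_of_not_dvd hnd,
    padicValNat_self, padicValRat.pow] at h4
  have h6 : (p : ℤ) ∣ 1 := ⟨padicValRat l q, by simpa using h4⟩
  exact hp.one_lt.ne' (by exact_mod_cast Int.eq_one_of_dvd_one (by positivity) h6)

lemma finrank_K {p : ℕ} (hp : p.Prime) (a : ℕ → ℝ) (ha : ∀ l, a l ^ p = l)
    (S : Finset ℕ) (hS : ∀ l ∈ S, l.Prime) : Module.finrank ℚ (K a S) = p ^ S.card := by
  induction S using Finset.induction_on with
  | empty =>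
    rw [K, Finset.coe_empty, Set.image_empty, adjoin_empty]
    simp
  | insert l S hl ih =>
    have hS' : ∀ l ∈ S, l.Prime := fun l h => hS l (Finset.mem_insert_of_mem h)
    have hnm := not_mem hp a ha S hS' l (hS l (Finset.mem_insert_self _ _)) hl
    have hm : a l ^ p ∈ K a S := by rw [ha]; exact IntermediateField.natCast_mem _ _
    have hirr := irr hp (K a S) (a l) hnm ⟨_, hm⟩ rfl
    have hmin : X ^ p - C ⟨_, hm⟩ = minpoly (K a S) (a l) := by
      apply minpoly.eq_of_irreducible_of_monic hirr
      · simp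
      · exact monic_X_pow_sub_C _ hp.ne_zero
    have hint : IsIntegral (K a S) (a l) := by
      by_contra h
      rw [minpoly.eq_zero h] at hmin
      exact hirr.ne_zero hmin
    have hfr : Module.finrank (K a S) (IntermediateField.adjoin (K a S) {a l}) = p := by
      rw [adjoin.finrank hint, ← hmin, natDegree_X_pow_sub_C]
    rw [K_insert, Finset.card_insert_of_notMem hl, pow_succ, ← ih hS']
    conv_rhs => rw [← hfr]
    exact (Module.finrank_mul_finrank ℚ (K a S) (IntermediateField.adjoin (K a S) {a l})).symm

end PthRoots

/-- Besicovitch: the `p`-th roots of `n` distinct primes generate an extension of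
`ℚ` of degree `p^n`. -/
theorem degree_adjoin_pth_roots (p : ℕ) (hp : p.Prime) (n : ℕ)
    (ℓ : Fin n → ℕ) (hℓ : ∀ i, (ℓ i).Prime) (hinj : Function.Injective ℓ) :
    Module.finrank ℚ
      (IntermediateField.adjoin ℚ
        (Set.range fun i : Fin n => (((ℓ i : ℝ) ^ ((p : ℝ)⁻¹) : ℝ) : ℂ))) = p ^ n := by
  let a : ℕ → ℝ := fun l => (l : ℝ) ^ ((p : ℝ)⁻¹)
  have ha : ∀ l, a l ^ p = l := fun l => Real.rpow_inv_natCast_pow (Nat.cast_nonneg l) hp.ne_zero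
  have h := PthRoots.finrank_K hp a ha (Finset.univ.image ℓ) (by simpa using hℓ)
  rw [Finset.card_image_of_injective _ hinj, Finset.card_univ, Fintype.card_fin] at h
  let f : ℝ →ₐ[ℚ] ℂ := Complex.ofRealAm.restrictScalars ℚ
  have hmap : IntermediateField.adjoin ℚ
        (Set.range fun i : Fin n => (((ℓ i : ℝ) ^ ((p : ℝ)⁻¹) : ℝ) : ℂ))
      = (PthRoots.K a (Finset.univ.image ℓ)).map f := by
    unfold PthRoots.K
    rw [adjoin_map, Finset.coe_image, Finset.coe_univ, Set.image_univ, ← Set.range_comp,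
      ← Set.range_comp]
    rfl
  rw [hmap, ← h]
  exact ((IntermediateField.equivMap _ f).toLinearEquiv.finrank_eq).symm
end
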